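/- arXiv:1811.07449 — 2 statements merged into one kernel-verified Lean document; each statement's English description precedes it below -/
import Mathlib

section
/- Let 2 ≤ r < m and g ≥ 3 be integers with r(2−g) + 2g > 0. Then every finite planar ({r,m};g)-graph has at least 1 + (m(g−2)+2g)/(r(2−g)+2g) vertices; in particular, n_p({r,m};g) ≥ 1 + (m(g−2)+2g)/(2g − r(g−2)). -/
open SimpleGraph

/-- `H` is a minor of `G`: there is an assignment of pairwise disjoint connected
branch sets in `G` to the vertices of `H`, with an edge of `G` between the branch
sets of any two adjacent vertices of `H`. -/
def SimpleGraph.IsMinorOf {W V : Type*} (H : SimpleGraph W) (G : SimpleGraph V) : Prop :=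
  ∃ f : W → Set V,
    (∀ w, (G.induce (f w)).Connected) ∧
    (Pairwise fun w₁ w₂ => Disjoint (f w₁) (f w₂)) ∧
    ∀ ⦃w₁ w₂⦄, H.Adj w₁ w₂ → ∃ v₁ ∈ f w₁, ∃ v₂ ∈ f w₂, G.Adj v₁ v₂

/-- A graph is planar iff it has no `K₅` minor and no `K₃,₃` minor (Wagner's theorem). -/
def SimpleGraph.IsPlanar {V : Type*} (G : SimpleGraph V) : Prop :=
  ¬ (completeGraph (Fin 5)).IsMinorOf G ∧
    ¬ (completeBipartiteGraph (Fin 3) (Fin 3)).IsMinorOf G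

/-- A graph is outerplanar iff it has no `K₄` minor and no `K₂,₃` minor. -/
def SimpleGraph.IsOuterplanar {V : Type*} (G : SimpleGraph V) : Prop :=
  ¬ (completeGraph (Fin 4)).IsMinorOf G ∧
    ¬ (completeBipartiteGraph (Fin 2) (Fin 3)).IsMinorOf G

/-- The degree of a vertex, as the cardinality of its neighbour set. -/
noncomputable def SimpleGraph.degN {V : Type*} (G : SimpleGraph V) (v : V) : ℕ :=
  (G.neighborSet v).ncard

/-- An `({r,m};g)`-graph: girth `g`, every vertex has degree `r` or `m`, both occur. -/
def IsBigirthGraph {V : Type*} (G : SimpleGraph V) (r m g : ℕ) : Prop :=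
  G.girth = g ∧ (∀ v, G.degN v = r ∨ G.degN v = m) ∧
    (∃ v, G.degN v = r) ∧ (∃ v, G.degN v = m)

/-- The set of orders of finite planar `({r,m};g)`-graphs. -/
def bicageOrders (r m g : ℕ) : Set ℕ :=
  {n | ∃ (V : Type) (_ : Fintype V) (G : SimpleGraph V),
    G.IsPlanar ∧ IsBigirthGraph G r m g ∧ Fintype.card V = n}

/-! A plane graph satisfies `|E| - |F| = n - 2` when connected, and if every cycle has weight at
least one for an edge weight `ω`, then each face boundary does, whence `|F| ≤ 2 ω(E)` and
`|E| - 2 ω(E) ≤ n - 2`. The constant weight `1 / g` gives `(1 - 2 / g) |E| ≤ n - 2`, which is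
compared with the lower bound `m + (n - 1) r` for the degree sum.

As planarity means here the absence of `K₅` and `K₃,₃` minors, the weighted inequality is proved
without an embedding, by induction on the number of edges. In a 3-connected graph the peripheral
cycles span the cycle space (Tutte), and the absence of the two minors forces every edge into at
most two of them: they take the place of the faces. An edge of weight more than `1 / 2` can be
deleted. A separation by at most one vertex splits the graph into two sides to which induction
applies; at a separation by two vertices `a`, `b` a virtual edge `ab` is first added to each side.
The weights of the virtual edges have to be adapted to the distance of `a` and `b` in the opposite
side, and this is what calls for general weights instead of the girth. -/

namespace PlanarGraph

variable {V : Type*} {G H : SimpleGraph V} {A B K Q S : Set V} {a b u v : V}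

/-! ### Connected sets -/

/-- Two vertex sets touch if some edge of `G` joins them. -/
def Touches (G : SimpleGraph V) (A B : Set V) : Prop :=
  ∃ a ∈ A, ∃ b ∈ B, G.Adj a b

lemma Touches.symm (h : Touches G A B) : Touches G B A :=
  let ⟨a, ha, b, hb, hab⟩ := h
  ⟨b, hb, a, ha, hab.symm⟩

lemma Touches.mono {A' B' : Set V} (h : Touches G A B) (hA : A ⊆ A') (hB : B ⊆ B') :
    Touches G A' B' :=
  let ⟨a, ha, b, hb, hab⟩ := h
  ⟨a, hA ha, b, hB hb, hab⟩

lemma connected_singleton (G : SimpleGraph V) (v : V) : (G.induce {v}).Connected where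
  preconnected := Preconnected.of_subsingleton
  nonempty := ⟨⟨v, rfl⟩⟩

lemma connected_union (hA : (G.induce A).Connected) (hB : (G.induce B).Connected)
    (h : Touches G A B) : (G.induce (A ∪ B)).Connected :=
  let ⟨_, ha, _, hb, hab⟩ := h
  connected_induce_union hA.preconnected hB.preconnected ha hb hab

lemma connected_insert (hA : (G.induce A).Connected) (h : Touches G A {v}) :
    (G.induce (insert v A)).Connected := by
  rw [Set.insert_eq, Set.union_comm]
  exact connected_union hA (connected_singleton G v) h

lemma nonempty_of_connected (hA : (G.induce A).Connected) : A.Nonempty :=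
  Set.nonempty_coe_sort.1 hA.nonempty

lemma touches_diff_of_preconnected (hS : (G.induce S).Preconnected) (hAS : A ⊆ S)
    (hA : A.Nonempty) (hB : (S \ A).Nonempty) : Touches G A (S \ A) := by
  obtain ⟨a, ha⟩ := hA
  obtain ⟨b, hbS, hbA⟩ := hB
  obtain ⟨p⟩ := hS ⟨a, hAS ha⟩ ⟨b, hbS⟩
  obtain ⟨d, -, hd₁, hd₂⟩ := p.exists_boundary_dart {x | (x : V) ∈ A} ha hbA
  exact ⟨d.fst, hd₁, d.snd, ⟨d.snd.2, hd₂⟩, d.adj⟩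

/-- `K` is closed in `S`: no edge of `G` leads from `K` to the rest of `S`. A connected subset of
`S` closed in `S` is thus a connected component of `S`. -/
def IsClosedIn (G : SimpleGraph V) (K S : Set V) : Prop :=
  ∀ ⦃u⦄, u ∈ K → ∀ ⦃x⦄, x ∈ S → G.Adj u x → x ∈ K

lemma exists_component_of_connected [Finite V] (hA : (G.induce A).Connected) (hAS : A ⊆ S) :
    ∃ K, A ⊆ K ∧ K ⊆ S ∧ (G.induce K).Connected ∧ IsClosedIn G K S := by
  obtain ⟨K, hAK, ⟨hKS, hK⟩, hmax⟩ :=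
    (Set.toFinite {K : Set V | K ⊆ S ∧ (G.induce K).Connected}).exists_le_maximal ⟨hAS, hA⟩
  refine ⟨K, hAK, hKS, hK, fun u hu x hx hux => ?_⟩
  exact hmax ⟨Set.insert_subset hx hKS, connected_insert hK ⟨u, hu, x, rfl, hux⟩⟩
    (Set.subset_insert x K) (Set.mem_insert x K)

lemma exists_component [Finite V] (hv : v ∈ S) :
    ∃ K, v ∈ K ∧ K ⊆ S ∧ (G.induce K).Connected ∧ IsClosedIn G K S := by
  simpa using
    exists_component_of_connected (connected_singleton G v) (Set.singleton_subset_iff.2 hv)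

lemma exists_connected_touches (hQ : (G.induce Q).Connected) (hA : A.Nonempty) (hB : B.Nonempty)
    (hAQ : A ⊆ Q) (hBQ : B ⊆ Q) (hdisj : Disjoint A B) (hAB : ¬ Touches G A B) :
    ∃ K ⊆ Q \ (A ∪ B), (G.induce K).Connected ∧ Touches G K A ∧ Touches G K B := by
  by_contra! hno
  let U := A ∪ ⋃₀ {K | K ⊆ Q \ (A ∪ B) ∧ (G.induce K).Connected ∧ Touches G K A}
  have hUQ : U ⊆ Q :=
    Set.union_subset hAQ (Set.sUnion_subset fun K hK => hK.1.trans Set.sdiff_subset)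
  have hBU : Disjoint B U := by
    refine Set.disjoint_union_right.2 ⟨hdisj.symm, Set.disjoint_sUnion_right.2 fun K hK => ?_⟩
    exact Set.disjoint_left.2 fun x hxB hxK => (hK.1 hxK).2 (Or.inr hxB)
  obtain ⟨x, hx, y, ⟨hyQ, hyU⟩, hxy⟩ := touches_diff_of_preconnected hQ.preconnected hUQ
    (hA.mono Set.subset_union_left)
    (hB.mono fun x hx => ⟨hBQ hx, Set.disjoint_left.1 hBU hx⟩)
  have hyA : y ∉ A := fun h => hyU (Or.inl h)
  rcases hx with hxA | ⟨K, ⟨hKQ, hK, hKA⟩, hxK⟩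
  · have hyB : y ∉ B := fun hyB => hAB ⟨x, hxA, y, hyB, hxy⟩
    exact hyU (Or.inr ⟨{y}, ⟨by simp [hyQ, hyA, hyB], connected_singleton G y,
      ⟨y, rfl, x, hxA, hxy.symm⟩⟩, rfl⟩)
  · have hyB : y ∉ B := fun hyB => hno K hKQ hK hKA ⟨x, hxK, y, hyB, hxy⟩
    refine hyU (Or.inr ⟨insert y K, ⟨?_, connected_insert hK ⟨x, hxK, y, rfl, hxy⟩,
      hKA.mono (Set.subset_insert y K) subset_rfl⟩, Set.mem_insert y K⟩)
    exact Set.insert_subset ⟨hyQ, by simp [hyA, hyB]⟩ hKQ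

/-! ### Excluded minors -/

lemma isMinorOf_mono {W : Type*} {M : SimpleGraph W} (hM : M.IsMinorOf H) (h : H ≤ G) :
    M.IsMinorOf G :=
  let ⟨f, hconn, hdisj, hadj⟩ := hM
  ⟨f, fun w => (hconn w).mono (comap_monotone _ h), hdisj, fun _ _ hw =>
    let ⟨v₁, h₁, v₂, h₂, hv⟩ := hadj hw
    ⟨v₁, h₁, v₂, h₂, h hv⟩⟩

lemma isPlanar_mono (hG : G.IsPlanar) (h : H ≤ G) : H.IsPlanar :=
  ⟨fun hM => hG.1 (isMinorOf_mono hM h), fun hM => hG.2 (isMinorOf_mono hM h)⟩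

/-- `P` links `x` and `y`: it is connected, avoids both vertices and contains a neighbour of each.
Contracting `P` onto `x` makes `x` and `y` adjacent. -/
structure IsLink (G : SimpleGraph V) (x y : V) (P : Set V) : Prop where
  connected : (G.induce P).Connected
  left_notMem : x ∉ P
  right_notMem : y ∉ P
  touches_left : Touches G {x} P
  touches_right : Touches G {y} P

lemma IsLink.mono {x y : V} {P : Set V} (h : IsLink G x y K) (hKP : K ⊆ P)
    (hP : (G.induce P).Connected) (hx : x ∉ P) (hy : y ∉ P) : IsLink G x y P :=
  ⟨hP, hx, hy, h.touches_left.mono subset_rfl hKP, h.touches_right.mono subset_rfl hKP⟩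

lemma IsLink.of_le (hK : IsLink H a b K) (h : H ≤ G) : IsLink G a b K where
  connected := hK.connected.mono (comap_monotone _ h)
  left_notMem := hK.left_notMem
  right_notMem := hK.right_notMem
  touches_left := let ⟨x, hx, y, hy, hxy⟩ := hK.touches_left; ⟨x, hx, y, hy, h hxy⟩
  touches_right := let ⟨x, hx, y, hy, hxy⟩ := hK.touches_right; ⟨x, hx, y, hy, h hxy⟩

lemma IsLink.connected_insert_left {x y : V} {P : Set V} (h : IsLink G x y P) :
    (G.induce (insert x P)).Connected :=
  connected_insert h.connected h.touches_left.symm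

lemma not_isPlanar_of_three_links {x y : V} {P Q R : Set V} (hxy : x ≠ y)
    (hP : IsLink G x y P) (hQ : IsLink G x y Q) (hR : IsLink G x y R)
    (hPQ : Disjoint P Q) (hPR : Disjoint P R) (hQR : Disjoint Q R)
    (hK : (G.induce K).Connected) (hxK : x ∉ K) (hyK : y ∉ K)
    (hKP : Disjoint K P) (hKQ : Disjoint K Q) (hKR : Disjoint K R)
    (hKP' : Touches G K P) (hKQ' : Touches G K Q) (hKR' : Touches G K R) : ¬ G.IsPlanar := by
  refine fun hG => hG.2 ⟨Sum.elim ![{x}, {y}, K] ![P, Q, R], ?_, ?_, ?_⟩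
  · simp [Fin.forall_fin_succ, hK, hP.connected, hQ.connected, hR.connected]
  · have := hP.left_notMem; have := hP.right_notMem; have := hQ.left_notMem
    have := hQ.right_notMem; have := hR.left_notMem; have := hR.right_notMem
    rintro (i | i) (j | j) hij <;> fin_cases i <;> fin_cases j <;>
      simp_all [disjoint_comm, eq_comm]
  · have h : ∀ i j, Touches G ((![{x}, {y}, K] : Fin 3 → Set V) i) (![P, Q, R] j) := by
      simp [Fin.forall_fin_succ, hP.touches_left, hP.touches_right, hQ.touches_left,
        hQ.touches_right, hR.touches_left, hR.touches_right, hKP', hKQ', hKR']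
    rintro (i | i) (j | j) hij
    exacts [by simp at hij, h i j, (h j i).symm, by simp at hij]

lemma not_isPlanar_of_three_touching_links {x y : V} {P Q R : Set V} (hxy : G.Adj x y)
    (hP : IsLink G x y P) (hQ : IsLink G x y Q) (hR : IsLink G x y R)
    (hPQ : Disjoint P Q) (hPR : Disjoint P R) (hQR : Disjoint Q R)
    (hPQ' : Touches G P Q) (hPR' : Touches G P R) (hQR' : Touches G Q R) : ¬ G.IsPlanar := by
  refine fun hG => hG.1 ⟨![{x}, {y}, P, Q, R], ?_, ?_, ?_⟩
  · simp [Fin.forall_fin_succ, hP.connected, hQ.connected, hR.connected]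
  · have := hP.left_notMem; have := hP.right_notMem; have := hQ.left_notMem
    have := hQ.right_notMem; have := hR.left_notMem; have := hR.right_notMem
    have := hxy.ne
    intro i j hij
    fin_cases i <;> fin_cases j <;> simp_all [disjoint_comm, eq_comm]
  · have hxy' : Touches G {x} {y} := ⟨x, rfl, y, rfl, hxy⟩
    intro i j hij
    change Touches G _ _
    fin_cases i <;> fin_cases j <;>
      simp_all [hP.touches_left, hP.touches_right, hQ.touches_left, hQ.touches_right,
        hR.touches_left, hR.touches_right, hP.touches_left.symm, hP.touches_right.symm,
        hQ.touches_left.symm, hQ.touches_right.symm, hR.touches_left.symm, hR.touches_right.symm,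
        hxy'.symm, hPQ'.symm, hPR'.symm, hQR'.symm]

lemma reachable_of_subset (hAS : A ⊆ S) (hA : (G.induce A).Preconnected) (hu : u ∈ A) (hv : v ∈ A) :
    (G.induce S).Reachable ⟨u, hAS hu⟩ ⟨v, hAS hv⟩ :=
  (hA ⟨u, hu⟩ ⟨v, hv⟩).map (G.induceHomOfLE hAS).toHom

lemma connected_union_of_isLink (hH : H ≤ G ⊔ edge a b) (hK : IsLink G a b K)
    (hA : (H.induce A).Connected) (ha : a ∈ A) : (G.induce (A ∪ K)).Connected := by
  have haK : insert a K ⊆ A ∪ K := Set.insert_subset (Or.inl ha) Set.subset_union_right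
  have hab : b ∈ A → ∀ haA' hbA', (G.induce (A ∪ K)).Reachable ⟨a, haA'⟩ ⟨b, hbA'⟩ := by
    intro hb _ _
    have hconn := connected_insert hK.connected_insert_left
      (hK.touches_right.symm.mono (Set.subset_insert a K) subset_rfl)
    exact reachable_of_subset (Set.insert_subset (Set.mem_union_left K hb) haK)
      hconn.preconnected (by simp) (by simp)
  have hstep : ∀ u v : A, (H.induce A).Adj u v →
      Relation.ReflTransGen (G.induce (A ∪ K)).Adj ⟨u, Or.inl u.2⟩ ⟨v, Or.inl v.2⟩ := by
    rintro ⟨u, hu⟩ ⟨v, hv⟩ huv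
    rw [← reachable_iff_reflTransGen]
    have huv' := hH huv
    rw [sup_adj, edge_adj] at huv'
    rcases huv' with huv' | ⟨⟨rfl, rfl⟩ | ⟨rfl, rfl⟩, -⟩
    · exact Adj.reachable huv'
    · exact hab hv _ _
    · exact (hab hu _ _).symm
  refine (connected_iff_exists_forall_reachable _).2 ⟨⟨a, Or.inl ha⟩, ?_⟩
  rintro ⟨u, huA | huK⟩
  · rw [reachable_iff_reflTransGen]
    exact Relation.ReflTransGen.lift' (fun x : A => (⟨x, Or.inl x.2⟩ : ↑(A ∪ K))) hstep
      ⟨a, ha⟩ ⟨u, huA⟩ ((reachable_iff_reflTransGen _ _).1 (hA.preconnected _ _))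
  · exact reachable_of_subset haK hK.connected_insert_left.preconnected (Or.inl rfl) (Or.inr huK)

lemma disjoint_of_touches_of_disjoint_support (hA : (H.induce A).Connected)
    (hAB : Touches H A B) (hK : Disjoint K H.support) : Disjoint A K := by
  refine Set.disjoint_left.2 fun x hxA hxK => Set.disjoint_left.1 hK hxK ?_
  obtain ⟨u, hu, v, -, huv⟩ := hAB
  rcases eq_or_ne u x with rfl | hux
  · exact ⟨v, huv⟩
  · obtain ⟨y, rfl, z, -, hyz⟩ := touches_diff_of_preconnected hA.preconnected
      (Set.singleton_subset_iff.2 hxA) (Set.singleton_nonempty x) ⟨u, hu, hux⟩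
    exact ⟨z, hyz⟩

lemma isMinorOf_of_isLink {W : Type*} {M : SimpleGraph W} (hM : M.IsMinorOf H)
    (hpos : ∀ w, ∃ w', M.Adj w w') (hH : H ≤ G ⊔ edge a b) (hK : IsLink G a b K)
    (hKH : Disjoint K H.support) : M.IsMinorOf G := by
  obtain ⟨f, hconn, hdisj, hadj⟩ := hM
  have hfK : ∀ w, Disjoint (f w) K := fun w =>
    disjoint_of_touches_of_disjoint_support (hconn w) (hadj (hpos w).choose_spec) hKH
  let f' : W → Set V := fun w => f w ∪ {x ∈ K | a ∈ f w}
  have hf' : ∀ w, a ∈ f w → f' w = f w ∪ K := fun w h => by simp [f', h]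
  refine ⟨f', fun w => ?_, fun w₁ w₂ hw => ?_, fun w₁ w₂ hw => ?_⟩
  · by_cases h : a ∈ f w
    · exact (hf' w h).symm ▸ connected_union_of_isLink hH hK (hconn w) h
    · have hf'w : f' w = f w := by simp [f', h]
      rw [hf'w]
      refine Connected.mono (fun u v huv => ?_) (hconn w)
      have huv' := hH huv
      rw [sup_adj, edge_adj] at huv'
      rcases huv' with huv' | ⟨⟨hu, -⟩ | ⟨-, hv⟩, -⟩
      exacts [huv', (h (hu ▸ u.2)).elim, (h (hv ▸ v.2)).elim]
  · change Disjoint (f w₁ ∪ _) (f w₂ ∪ _)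
    rw [Set.disjoint_union_left, Set.disjoint_union_right, Set.disjoint_union_right]
    refine ⟨⟨hdisj hw, (hfK w₁).mono_right (Set.sep_subset _ _)⟩,
      (hfK w₂).symm.mono_left (Set.sep_subset _ _), ?_⟩
    exact Set.disjoint_left.2 fun x hx₁ hx₂ => Set.disjoint_left.1 (hdisj hw) hx₁.2 hx₂.2
  · obtain ⟨v₁, hv₁, v₂, hv₂, hv⟩ := hadj hw
    have hv' := hH hv
    rw [sup_adj, edge_adj] at hv'
    rcases hv' with hv' | ⟨⟨rfl, rfl⟩ | ⟨rfl, rfl⟩, -⟩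
    · exact ⟨v₁, Or.inl hv₁, v₂, Or.inl hv₂, hv'⟩
    · rw [hf' _ hv₁]
      exact hK.touches_right.symm.mono Set.subset_union_right
        (Set.singleton_subset_iff.2 (Or.inl hv₂))
    · rw [hf' _ hv₂]
      exact hK.touches_right.mono (Set.singleton_subset_iff.2 (Or.inl hv₁))
        Set.subset_union_right

lemma isPlanar_of_isLink (hG : G.IsPlanar) (hH : H ≤ G ⊔ edge a b) (hK : IsLink G a b K)
    (hKH : Disjoint K H.support) : H.IsPlanar := by
  refine ⟨fun hM => hG.1 (isMinorOf_of_isLink hM ?_ hH hK hKH),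
    fun hM => hG.2 (isMinorOf_of_isLink hM ?_ hH hK hKH)⟩
  · exact fun i => ⟨i + 1, by simp⟩
  · rintro (i | i)
    exacts [⟨Sum.inr i, by simp⟩, ⟨Sum.inl i, by simp⟩]

/-! ### The cycle space -/

section Chains

variable {z : Sym2 V → ZMod 2}

lemma apply_self_eq_zero (hz : Function.support z ⊆ G.edgeSet) (v : V) : z s(v, v) = 0 := by
  by_contra h
  exact G.loopless.irrefl v (hz h)

/-- The pairs with at least one element in `A`. -/
def pairsMeeting (A : Set V) : Set (Sym2 V) := {e | ∃ v ∈ e, v ∈ A}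

lemma mk_mem_pairsMeeting : s(u, v) ∈ pairsMeeting A ↔ u ∈ A ∨ v ∈ A := by
  simp [pairsMeeting]

open scoped Classical in
/-- The chain of a walk: the number of times the walk traverses each edge, modulo two. -/
noncomputable def walkChain (p : G.Walk u v) : Sym2 V → ZMod 2 :=
  fun e => p.edges.count e

lemma walkChain_append {w : V} (p : G.Walk u v) (q : G.Walk v w) :
    walkChain (p.append q) = walkChain p + walkChain q := by
  ext e
  simp [walkChain]

lemma walkChain_reverse (p : G.Walk u v) : walkChain p.reverse = walkChain p := by
  ext e
  simp [walkChain]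

lemma support_walkChain_subset (p : G.Walk u v) :
    Function.support (walkChain p) ⊆ {e | e ∈ p.edges} := by
  classical
  intro e he
  by_contra h
  exact he (by rw [walkChain, List.count_eq_zero_of_not_mem h, Nat.cast_zero])

lemma walkChain_eq_one (p : G.Walk u v) (hp : p.IsTrail) {e : Sym2 V} (he : e ∈ p.edges) :
    walkChain p e = 1 := by
  classical
  simp [walkChain, List.count_eq_one_of_mem hp.edges_nodup he]

lemma walkChain_ne_zero {c : G.Walk v v} (hc : c.IsCycle) : walkChain c ≠ 0 := fun h => by
  obtain ⟨e, he⟩ := List.exists_mem_of_ne_nil c.edges (by simpa using hc.not_nil)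
  exact one_ne_zero ((walkChain_eq_one c hc.isTrail he).symm.trans (congrFun h e))

open scoped Classical in
lemma walkChain_cons {w : V} (h : G.Adj u v) (p : G.Walk v w) :
    walkChain (Walk.cons h p) = Pi.single s(u, v) 1 + walkChain p := by
  ext e
  rcases eq_or_ne e s(u, v) with rfl | he
  · simp [walkChain, add_comm]
  · simp [walkChain, he, List.count_cons_of_ne he.symm]

variable [Fintype V]

/-- The boundary of a chain `z : Sym2 V → ZMod 2` of edges: at `v`, the sum of `z` over the pairs
containing `v`. -/
def boundary : (Sym2 V → ZMod 2) →ₗ[ZMod 2] (V → ZMod 2) :=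
  LinearMap.pi fun v => ∑ u, LinearMap.proj s(v, u)

/-- The cycle space of `G`: the chains supported on the edges of `G` with boundary zero. Chains are
functions on all of `Sym2 V`, so that the cycle spaces of graphs on `V` are comparable. -/
def cycleSpace (G : SimpleGraph V) : Submodule (ZMod 2) (Sym2 V → ZMod 2) where
  carrier := {z | Function.support z ⊆ G.edgeSet ∧ boundary z = 0}
  add_mem' hz hz' := ⟨(Function.support_add _ _).trans (Set.union_subset hz.1 hz'.1), by
    rw [map_add, hz.2, hz'.2, add_zero]⟩
  zero_mem' := by simp
  smul_mem' c _ hz := ⟨(Function.support_const_smul_subset c _).trans hz.1, by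
    rw [map_smul, hz.2, smul_zero]⟩

lemma cycleSpace_mono (h : H ≤ G) : cycleSpace H ≤ cycleSpace G :=
  fun _ hz => ⟨hz.1.trans (edgeSet_mono h), hz.2⟩

lemma boundary_apply (z : Sym2 V → ZMod 2) (v : V) : boundary z v = ∑ u, z s(v, u) := by
  simp [boundary]

lemma sum_boundary (hz : ∀ v, z s(v, v) = 0) : ∑ v, boundary z v = 0 := by
  simp only [boundary_apply, ← Finset.sum_product']
  refine Finset.sum_involution (fun p _ => p.swap) ?_ ?_ (by simp) (by simp)
  · rintro ⟨u, v⟩ -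
    rw [Prod.swap_prod_mk, Sym2.eq_swap, CharTwo.add_self_eq_zero]
  · rintro ⟨u, v⟩ - h huv
    obtain rfl : v = u := congrArg Prod.fst huv
    exact h (hz v)

lemma boundary_eq_zero_of_forall_ne (hz : Function.support z ⊆ G.edgeSet)
    (h : ∀ v ≠ a, boundary z v = 0) : boundary z = 0 := by
  have ha := sum_boundary (apply_self_eq_zero hz)
  rw [Finset.sum_eq_single a (fun v _ => h v) (by simp)] at ha
  funext v
  rcases eq_or_ne v a with rfl | hv
  exacts [ha, h v hv]

lemma boundary_indicator_pairsMeeting (z : Sym2 V → ZMod 2) (hv : v ∈ A) :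
    boundary ((pairsMeeting A).indicator z) v = boundary z v := by
  simp only [boundary_apply]
  exact Finset.sum_congr rfl fun u _ =>
    Set.indicator_of_mem (mk_mem_pairsMeeting.2 (Or.inl hv)) z

lemma exists_ne_crossing (hz : z ∈ cycleSpace G) (hu : u ∈ A) (hv : v ∉ A) (huv : z s(u, v) ≠ 0) :
    ∃ x ∈ A, ∃ y ∉ A, z s(x, y) ≠ 0 ∧ s(x, y) ≠ s(u, v) := by
  by_contra! hcross
  have hterm : ∀ y ∉ A, ∀ x, (x, y) ≠ (u, v) → (pairsMeeting A).indicator z s(y, x) = 0 := by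
    intro y hy x hne
    by_contra h
    obtain ⟨hmem, hyx⟩ := Set.indicator_apply_ne_zero.1 h
    have hxA := (mk_mem_pairsMeeting.1 hmem).resolve_left hy
    rcases Sym2.eq_iff.1 (hcross x hxA y hy (by rwa [Sym2.eq_swap])) with ⟨rfl, rfl⟩ | ⟨rfl, rfl⟩
    exacts [hne rfl, hy hu]
  have hzero : boundary ((pairsMeeting A).indicator z) = 0 := by
    have hsupp : Function.support ((pairsMeeting A).indicator z) ⊆ G.edgeSet := by
      rw [Set.support_indicator]
      exact Set.inter_subset_right.trans hz.1
    refine boundary_eq_zero_of_forall_ne (a := v) hsupp fun y hyv => ?_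
    by_cases hy : y ∈ A
    · rw [boundary_indicator_pairsMeeting z hy, hz.2, Pi.zero_apply]
    · rw [boundary_apply]
      exact Finset.sum_eq_zero fun x _ => hterm y hy x (by simp [hyv])
  have hsum := congrFun hzero v
  rw [boundary_apply, Finset.sum_eq_single u (fun x _ hx => hterm v hv x (by simp [hx])) (by simp),
    Set.indicator_of_mem (mk_mem_pairsMeeting.2 (Or.inr hu)), Sym2.eq_swap] at hsum
  exact huv hsum

lemma exists_isCycle_of_mem_cycleSpace (hz : z ∈ cycleSpace G) (hz0 : z ≠ 0) :
    ∃ (v : V) (c : G.Walk v v), c.IsCycle ∧ ∀ e ∈ c.edges, z e ≠ 0 := by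
  let H := fromEdgeSet (Function.support z)
  have hadj : ∀ {u v}, H.Adj u v ↔ z s(u, v) ≠ 0 := by
    intro u v
    refine ⟨fun h => h.1, fun h => ⟨h, ?_⟩⟩
    rintro rfl
    exact h (apply_self_eq_zero hz.1 u)
  have hHG : H ≤ G := fun u v h => hz.1 (hadj.1 h)
  suffices hH : ¬ H.IsAcyclic by
    simp only [IsAcyclic, not_forall, not_not] at hH
    obtain ⟨v, c, hc⟩ := hH
    refine ⟨v, c.mapLe hHG, (Walk.isCycle_mapLe hHG).2 hc, fun e he => ?_⟩
    rw [Walk.edges_mapLe_eq_edges] at he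
    induction e
    exact hadj.1 (c.edges_subset_edgeSet he)
  intro hH
  obtain ⟨e, he⟩ := Function.ne_iff.1 hz0
  induction e with | _ u v
  have hbridge := isBridge_iff.1 (isAcyclic_iff_forall_isBridge.1 hH (hadj.2 he))
  obtain ⟨x, hx, y, hy, hxy, hne⟩ := exists_ne_crossing hz
    (A := {x | (H.deleteEdges {s(u, v)}).Reachable u x}) (Reachable.refl u) hbridge he
  exact hy (hx.trans (Adj.reachable (deleteEdges_adj.2 ⟨hadj.2 hxy, hne⟩)))

open scoped Classical in
lemma boundary_single {u v : V} (huv : u ≠ v) :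
    boundary (Pi.single s(u, v) 1) = Pi.single u 1 + Pi.single v 1 := by
  ext x
  rw [boundary_apply]
  rcases eq_or_ne x u with rfl | hxu
  · rw [Finset.sum_eq_single v (fun y _ hy => Pi.single_eq_of_ne (by simp [hy, huv]) 1)
      (by simp)]
    simp [huv]
  · rcases eq_or_ne x v with rfl | hxv
    · rw [Finset.sum_eq_single u (fun y _ hy => Pi.single_eq_of_ne (by simp [hy, hxu]) 1)
        (by simp), Sym2.eq_swap]
      simp [hxu]
    · rw [Finset.sum_eq_zero fun y _ => Pi.single_eq_of_ne (by simp [hxu, hxv]) 1]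
      simp [hxu, hxv]

open scoped Classical in
lemma boundary_walkChain (p : G.Walk u v) :
    boundary (walkChain p) = Pi.single u 1 + Pi.single v 1 := by
  induction p with
  | nil =>
    ext x
    simp [walkChain, boundary_apply, CharTwo.add_self_eq_zero]
  | cons h p ih =>
    rw [walkChain_cons, map_add, ih, boundary_single h.ne, ZModModule.add_add_add_cancel]

lemma walkChain_mem_cycleSpace (c : G.Walk v v) : walkChain c ∈ cycleSpace G := by
  classical
  refine ⟨fun e he => c.edges_subset_edgeSet (support_walkChain_subset c he), ?_⟩
  rw [boundary_walkChain, ZModModule.add_self]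

lemma mem_of_forall_isCycle {W : Submodule (ZMod 2) (Sym2 V → ZMod 2)} (hz : z ∈ cycleSpace G)
    (h : ∀ (v : V) (c : G.Walk v v), c.IsCycle → (∀ e ∈ c.edges, z e ≠ 0) → walkChain c ∈ W) :
    z ∈ W := by
  induction hn : (Function.support z).ncard using Nat.strong_induction_on generalizing z with
  | _ n ih
  subst hn
  rcases eq_or_ne z 0 with rfl | hz0
  · exact W.zero_mem
  obtain ⟨v, c, hc, hcz⟩ := exists_isCycle_of_mem_cycleSpace hz hz0
  have hsub : Function.support (z - walkChain c) ⊆ Function.support z := by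
    intro e he hez
    have hec : e ∉ c.edges := fun hec => hcz e hec hez
    exact he (by rw [Pi.sub_apply, hez, Function.notMem_support.1 fun h => hec
      (support_walkChain_subset c h), sub_zero])
  rw [← sub_add_cancel z (walkChain c)]
  refine W.add_mem (ih _ ?_ (Submodule.sub_mem _ hz (walkChain_mem_cycleSpace c))
    (fun v c' hc' hc'z => h v c' hc' fun e he => hsub (hc'z e he)) rfl) (h v c hc hcz)
  refine Set.ncard_lt_ncard (Set.ssubset_iff_exists.2 ⟨hsub, ?_⟩) (Set.toFinite _)
  obtain ⟨e, he⟩ := List.exists_mem_of_ne_nil c.edges (by simpa using hc.not_nil)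
  refine ⟨e, hcz e he, ?_⟩
  rw [Function.notMem_support, Pi.sub_apply, walkChain_eq_one c hc.isTrail he, sub_eq_zero]
  exact Fin.eq_one_of_ne_zero _ (hcz e he)

end Chains

/-! ### Edge weights -/

lemma finrank_span_lt_card_of_sum_eq_zero {R M : Type*} [DivisionRing R] [AddCommGroup M]
    [Module R M] {F : Finset M} (hF : F.Nonempty) (hsum : ∑ x ∈ F, x = 0) :
    Module.finrank R (Submodule.span R (F : Set M)) < F.card := by
  classical
  obtain ⟨x₀, hx₀⟩ := hF
  have hmem : x₀ ∈ Submodule.span R (F.erase x₀ : Set M) := by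
    rw [← Finset.add_sum_erase F _ hx₀] at hsum
    rw [← neg_mem_iff, neg_eq_of_add_eq_zero_right hsum]
    exact sum_mem fun x hx => Submodule.subset_span hx
  rw [← Finset.insert_erase hx₀, Finset.coe_insert, Submodule.span_insert_eq_span hmem,
    Finset.insert_erase hx₀]
  exact (finrank_span_finset_le_card _).trans_lt (Finset.card_erase_lt_of_mem hx₀)

section Weight

variable [Fintype V] {z : Sym2 V → ZMod 2} {w w' : Sym2 V → ℚ} {s t : Set (Sym2 V)}

lemma ncard_edgeSet_lt_finrank_add_ncard (hGS : G.support ⊆ S) (hS : S.Nonempty) :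
    G.edgeSet.ncard < Module.finrank (ZMod 2) (cycleSpace G) + S.ncard := by
  classical
  obtain ⟨a, ha⟩ := hS
  let ext := Function.ExtendByZero.linearMap (ZMod 2) (Subtype.val : G.edgeSet → Sym2 V)
  let L : (G.edgeSet → ZMod 2) →ₗ[ZMod 2] (↑(S \ {a}) → ZMod 2) :=
    LinearMap.funLeft (ZMod 2) (ZMod 2) Subtype.val ∘ₗ boundary ∘ₗ ext
  have hext : Function.Injective ext := fun x y h => funext fun e => by
    simpa [ext, Subtype.val_injective.extend_apply] using congrFun h e.1
  have hker : (LinearMap.ker L).map ext ≤ cycleSpace G := by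
    rintro _ ⟨y, hy, rfl⟩
    have hsupp : Function.support (ext y) ⊆ G.edgeSet := by
      intro e he
      by_contra h
      exact he (Function.extend_apply' _ _ _ (by simpa using h))
    refine ⟨hsupp, boundary_eq_zero_of_forall_ne (a := a) hsupp fun v hv => ?_⟩
    by_cases hvG : v ∈ S
    · exact congrFun hy ⟨v, hvG, hv⟩
    · rw [boundary_apply]
      refine Finset.sum_eq_zero fun u _ => Function.notMem_support.1 fun h => hvG (hGS ⟨u, hsupp h⟩)
  have hcodim : Module.finrank (ZMod 2) (LinearMap.range L) ≤ (S \ {a}).ncard := by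
    simpa [← Nat.card_eq_fintype_card] using Submodule.finrank_le (LinearMap.range L)
  have hrank : Module.finrank (ZMod 2) (LinearMap.range L) +
      Module.finrank (ZMod 2) (LinearMap.ker L) = G.edgeSet.ncard := by
    simpa [← Nat.card_eq_fintype_card] using L.finrank_range_add_finrank_ker
  have hfinrank : Module.finrank (ZMod 2) (LinearMap.ker L) ≤
      Module.finrank (ZMod 2) (cycleSpace G) :=
    (Submodule.equivMapOfInjective ext hext _).finrank_eq.trans_le (Submodule.finrank_mono hker)
  have hcard := Set.ncard_sdiff_singleton_add_one ha
  omega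

/-- The total weight of a set of edges under the weight function `w`. -/
noncomputable def weight (w : Sym2 V → ℚ) (s : Set (Sym2 V)) : ℚ :=
  ∑ e, s.indicator w e

lemma weight_union (h : Disjoint s t) : weight w (s ∪ t) = weight w s + weight w t := by
  simp only [weight, ← Finset.sum_add_distrib, Set.indicator_union_of_disjoint h]

lemma weight_congr (h : ∀ e ∈ s, w e = w' e) : weight w s = weight w' s :=
  Finset.sum_congr rfl fun e _ => congrFun (Set.indicator_congr h) e

lemma weight_singleton (w : Sym2 V → ℚ) (e : Sym2 V) : weight w {e} = w e := by
  classical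
  simp [weight, Set.indicator_apply]

lemma weight_nonneg (hw : 0 ≤ w) : 0 ≤ weight w s :=
  Finset.sum_nonneg fun _ _ => Set.indicator_nonneg (fun e _ => hw e) _

lemma weight_mono (hw : 0 ≤ w) (h : s ⊆ t) : weight w s ≤ weight w t :=
  Finset.sum_le_sum fun _ _ => Set.indicator_le_indicator_of_subset h hw _

/-- The number of edges of `G` minus twice their weight. When every cycle of a planar graph has
weight at least one, double counting edge-face incidences shows that twice the weight of all edges
is at least the number of faces, so that by Euler's formula `excess G w ≤ |V(G)| - 2`. -/
noncomputable def excess (G : SimpleGraph V) (w : Sym2 V → ℚ) : ℚ :=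
  G.edgeSet.ncard - 2 * weight w G.edgeSet

lemma excess_le_ncard_edgeSet (hw : 0 ≤ w) : excess G w ≤ G.edgeSet.ncard :=
  sub_le_self _ (mul_nonneg zero_le_two (weight_nonneg hw))

lemma excess_eq_add (h : G.edgeSet = H.edgeSet ∪ s) (hs : Disjoint H.edgeSet s) :
    excess G w = excess H w + (s.ncard - 2 * weight w s) := by
  rw [excess, excess, h, weight_union hs, Set.ncard_union_eq hs]
  push_cast
  ring

/-- Every cycle has weight at least one; as every nonzero element of the cycle space contains a
cycle, this is stated for all of them. -/
def HasHeavyCycles (G : SimpleGraph V) (w : Sym2 V → ℚ) : Prop :=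
  ∀ z ∈ cycleSpace G, z ≠ 0 → 1 ≤ weight w (Function.support z)

lemma sum_weight_add_weight_sum_le {F : Finset (Sym2 V → ZMod 2)} (hw : 0 ≤ w)
    (hFG : ∀ z ∈ F, Function.support z ⊆ G.edgeSet)
    (hF : ∀ e, (F.filter fun z => z e ≠ 0).card ≤ 2) :
    ∑ z ∈ F, weight w (Function.support z) + weight w (Function.support (∑ z ∈ F, z)) ≤
      2 * weight w G.edgeSet := by
  classical
  simp only [weight]
  rw [Finset.sum_comm, Finset.mul_sum, ← Finset.sum_add_distrib]
  refine Finset.sum_le_sum fun e _ => ?_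
  have hval : ∀ y : ZMod 2, y = if y ≠ 0 then 1 else 0 := by decide
  have hsum : (∑ z ∈ F, z) e = ((F.filter fun z => z e ≠ 0).card : ZMod 2) := by
    rw [Finset.sum_apply, Finset.card_filter, Nat.cast_sum]
    exact Finset.sum_congr rfl fun z _ => by simpa using hval (z e)
  have hcount : ∑ z ∈ F, (Function.support z).indicator w e =
      (F.filter fun z => z e ≠ 0).card * w e := by
    simp [Set.indicator_apply, Finset.sum_ite]
  rw [hcount, Set.indicator_apply, Function.mem_support, hsum]
  by_cases he : e ∈ G.edgeSet
  · have hcard := hF e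
    have hwe : 0 ≤ w e := hw e
    rw [Set.indicator_of_mem he]
    interval_cases (F.filter fun z => z e ≠ 0).card
    · simpa using hwe
    · simp [two_mul]
    · simp [CharTwo.two_eq_zero]
  · have hempty : (F.filter fun z => z e ≠ 0) = ∅ :=
      Finset.filter_eq_empty_iff.2 fun z hz h => he (hFG z hz h)
    simp [hempty, he]

lemma support_nonempty_of_cycleSpace_ne_bot (h : cycleSpace G ≠ ⊥) : G.support.Nonempty := by
  obtain ⟨z, hz, hz0⟩ := Submodule.exists_mem_ne_zero_of_ne_bot h
  obtain ⟨e, he⟩ := Function.ne_iff.1 hz0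
  induction e with | _ u v
  exact ⟨u, v, hz.1 he⟩

lemma excess_add_two_le_of_span {F : Finset (Sym2 V → ZMod 2)} (hw : 0 ≤ w)
    (hG : HasHeavyCycles G w) (hFG : ∀ z ∈ F, z ∈ cycleSpace G) (hF0 : 0 ∉ F)
    (hspan : cycleSpace G ≤ Submodule.span (ZMod 2) F) (hne : cycleSpace G ≠ ⊥)
    (hF : ∀ e, (F.filter fun z => z e ≠ 0).card ≤ 2) :
    excess G w + 2 ≤ G.support.ncard := by
  have hFne : F.Nonempty := by
    by_contra h
    rw [Finset.not_nonempty_iff_eq_empty.1 h, Finset.coe_empty, Submodule.span_empty] at hspan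
    exact hne (le_bot_iff.1 hspan)
  have hdim := ncard_edgeSet_lt_finrank_add_ncard subset_rfl
    (support_nonempty_of_cycleSpace_ne_bot hne)
  have hFweight : (F.card : ℚ) ≤ ∑ z ∈ F, weight w (Function.support z) := by
    rw [← nsmul_one]
    exact Finset.card_nsmul_le_sum F _ 1 fun z hz => hG z (hFG z hz) fun h => hF0 (h ▸ hz)
  have hweight := sum_weight_add_weight_sum_le hw (fun z hz => (hFG z hz).1) hF
  have hrank : (Module.finrank (ZMod 2) (cycleSpace G) : ℚ) + 1 ≤ 2 * weight w G.edgeSet := by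
    have hspan' := Submodule.finrank_mono hspan
    by_cases hsum : ∑ z ∈ F, z = 0
    · have hlt : (Module.finrank (ZMod 2) (cycleSpace G) : ℚ) + 1 ≤ F.card := by
        exact_mod_cast hspan'.trans_lt (finrank_span_lt_card_of_sum_eq_zero hFne hsum)
      linarith [weight_nonneg hw (s := Function.support (∑ z ∈ F, z))]
    · have hle : (Module.finrank (ZMod 2) (cycleSpace G) : ℚ) ≤ F.card := by
        exact_mod_cast hspan'.trans (finrank_span_finset_le_card F)
      linarith [hG _ (sum_mem hFG) hsum]
  have hdim' : (G.edgeSet.ncard : ℚ) + 1 ≤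
      Module.finrank (ZMod 2) (cycleSpace G) + G.support.ncard := by exact_mod_cast hdim
  rw [excess]
  linarith

end Weight

section Cycles

variable {x y w : V}

lemma connected_support_diff_start {p : G.Walk u v} (hp : p.IsPath) (huv : u ≠ v) :
    (G.induce ({x | x ∈ p.support} \ {u})).Connected := by
  cases p with
  | nil => exact absurd rfl huv
  | cons h p =>
    rw [Walk.cons_isPath_iff] at hp
    have hset : {x | x ∈ (Walk.cons h p).support} \ {u} = {x | x ∈ p.support} := by
      ext x
      rcases eq_or_ne x u with rfl | hx <;> simp_all
    exact hset ▸ p.connected_induce_support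

/-- The vertices of a walk other than its two ends. -/
def pathInterior (p : G.Walk u v) : Set V := {x | x ∈ p.support ∧ x ≠ u ∧ x ≠ v}

lemma isLink_pathInterior {p : G.Walk u v} (hp : p.IsPath) (hne : (pathInterior p).Nonempty) :
    IsLink G u v (pathInterior p) := by
  cases p with
  | nil =>
    obtain ⟨x, hx, hxu, -⟩ := hne
    exact absurd (by simpa using hx) hxu
  | @cons _ a _ h p =>
    rw [Walk.cons_isPath_iff] at hp
    obtain ⟨hp, hu⟩ := hp
    have hset : pathInterior (Walk.cons h p) = {x | x ∈ p.reverse.support} \ {v} := by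
      ext x
      rcases eq_or_ne x u with rfl | hx <;> simp_all [pathInterior]
    have hav : a ≠ v := by
      rintro rfl
      obtain ⟨x, hx, hxa⟩ := hset ▸ hne
      rw [(Walk.isPath_iff_nil.1 hp).eq_nil] at hx
      exact hxa (by simpa using hx)
    have hpen := p.adj_penultimate (Walk.not_nil_of_ne hav)
    refine ⟨hset ▸ connected_support_diff_start hp.reverse hav.symm, fun h => h.2.1 rfl,
      fun h => h.2.2 rfl, ?_, ?_⟩
    · exact ⟨u, rfl, a, hset ▸ ⟨by simp, hav⟩, h⟩
    · exact ⟨v, rfl, p.penultimate, hset ▸ ⟨by simp, hpen.ne⟩, hpen.symm⟩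

lemma pathInterior_eq_empty_iff {p : G.Walk u v} (hp : p.IsPath) (huv : u ≠ v) :
    pathInterior p = ∅ ↔ s(u, v) ∈ p.edges := by
  cases p with
  | nil => exact absurd rfl huv
  | @cons _ a _ h p =>
    rw [Walk.cons_isPath_iff] at hp
    obtain ⟨hp, hu⟩ := hp
    constructor
    · intro hempty
      have hav : a = v := by
        by_contra hav
        exact Set.eq_empty_iff_forall_notMem.1 hempty a ⟨by simp, h.ne', hav⟩
      simp [hav]
    · intro he
      have hav : v = a := by
        simpa [huv, huv.symm] using (List.mem_cons.1 he).resolve_right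
          fun h => hu (Walk.fst_mem_support_of_mem_edges _ h)
      subst hav
      rw [(Walk.isPath_iff_nil.1 hp).eq_nil]
      ext x
      simp only [pathInterior, Walk.support_cons, Walk.support_nil, List.mem_cons,
        List.not_mem_nil, Set.mem_ofPred_eq, Set.mem_empty_iff_false]
      tauto

/-- The paths `p` and `q` have the same ends and no other common vertices, and together they
traverse the closed walk `c`. -/
structure IsSplitting (c : G.Walk w w) (p q : G.Walk x y) : Prop where
  isPath_left : p.IsPath
  isPath_right : q.IsPath
  edges_perm : c.edges.Perm (p.edges ++ q.edges)
  mem_support_iff : ∀ v, v ∈ c.support ↔ v ∈ p.support ∨ v ∈ q.support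
  eq_or_eq : ∀ v ∈ p.support, v ∈ q.support → v = x ∨ v = y

lemma IsSplitting.symm {c : G.Walk w w} {p q : G.Walk x y} (h : IsSplitting c p q) :
    IsSplitting c q p where
  isPath_left := h.isPath_right
  isPath_right := h.isPath_left
  edges_perm := h.edges_perm.trans List.perm_append_comm
  mem_support_iff v := (h.mem_support_iff v).trans or_comm
  eq_or_eq v hq hp := h.eq_or_eq v hp hq

lemma IsSplitting.walkChain_eq {c : G.Walk w w} {p q : G.Walk x y} (h : IsSplitting c p q) :
    walkChain c = walkChain p + walkChain q := by
  classical
  ext e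
  simp [walkChain, h.edges_perm.count_eq]

lemma IsSplitting.mem_edges_iff {c : G.Walk w w} {p q : G.Walk x y} (h : IsSplitting c p q)
    {e : Sym2 V} : e ∈ c.edges ↔ e ∈ p.edges ∨ e ∈ q.edges := by
  rw [h.edges_perm.mem_iff, List.mem_append]

lemma IsSplitting.disjoint_pathInterior {c : G.Walk w w} {p q : G.Walk x y}
    (h : IsSplitting c p q) : Disjoint (pathInterior p) (pathInterior q) :=
  Set.disjoint_left.2 fun v hp hq => (h.eq_or_eq v hp.1 hq.1).elim hp.2.1 hp.2.2

lemma IsSplitting.pathInterior_union {c : G.Walk w w} {p q : G.Walk x y}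
    (h : IsSplitting c p q) :
    pathInterior p ∪ pathInterior q = {v | v ∈ c.support} \ {x, y} := by
  ext v
  simp only [pathInterior, Set.mem_union, Set.mem_ofPred_eq, Set.mem_sdiff, h.mem_support_iff,
    Set.mem_insert_iff, Set.mem_singleton_iff]
  tauto

lemma exists_isSplitting {c : G.Walk w w} (hc : c.IsCycle) (hx : x ∈ c.support)
    (hy : y ∈ c.support) (hxy : x ≠ y) : ∃ p q : G.Walk x y, IsSplitting c p q := by
  classical
  have hy' : y ∈ (c.rotate x hx).support := (c.mem_support_rotate_iff x hx).2 hy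
  have hcyc := (Walk.isCycle_rotate hx).2 hc
  have hspec := (c.rotate x hx).take_spec hy'
  set p := (c.rotate x hx).takeUntil y hy'
  set q := (c.rotate x hx).dropUntil y hy'
  rw [← hspec] at hcyc
  have hp : ¬ p.Nil := Walk.not_nil_of_ne hxy
  have hq : ¬ q.Nil := Walk.not_nil_of_ne hxy.symm
  refine ⟨p, q.reverse, hcyc.isPath_of_append_left hq, (hcyc.isPath_of_append_right hp).reverse,
    ?_, fun v => ?_, fun v hvp hvq => ?_⟩
  · refine (c.rotate_edges x hx).perm.symm.trans ?_
    rw [← hspec, Walk.edges_append, Walk.edges_reverse]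
    exact (List.reverse_perm _).symm.append_left _
  · rw [← c.mem_support_rotate_iff x hx, ← hspec, Walk.mem_support_append_iff,
      Walk.support_reverse, List.mem_reverse]
  · rw [Walk.support_reverse, List.mem_reverse] at hvq
    by_contra! hv
    have hnodup := hcyc.support_nodup
    rw [Walk.tail_support_append] at hnodup
    refine List.disjoint_of_nodup_append hnodup (a := v) ?_ ?_
    · exact ((Walk.mem_support_iff _).1 hvp).resolve_left hv.1
    · exact ((Walk.mem_support_iff _).1 hvq).resolve_left hv.2

lemma exists_three_arcs {c : G.Walk w w} (hc : c.IsCycle) {z : V} (hx : x ∈ c.support)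
    (hy : y ∈ c.support) (hz : z ∈ c.support) (hxy : x ≠ y) (hxz : x ≠ z) (hyz : y ≠ z) :
    ∃ (p : G.Walk x y) (q : G.Walk y z) (r : G.Walk z x),
      walkChain c = walkChain p + walkChain q + walkChain r ∧
      (∀ v ∈ p.support, v ∈ c.support ∧ v ≠ z) ∧ (∀ v ∈ q.support, v ∈ c.support ∧ v ≠ x) ∧
      (∀ v ∈ r.support, v ∈ c.support ∧ v ≠ y) := by
  obtain ⟨p, q, hpq⟩ := exists_isSplitting hc hx hy hxy
  wlog hzq : z ∈ q.support generalizing p q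
  · exact this q p hpq.symm (((hpq.mem_support_iff z).1 hz).resolve_right hzq)
  obtain ⟨q₁, q₂, -, -, rfl⟩ := hpq.isPath_right.mem_support_iff_exists_append.1 hzq
  have hq := hpq.isPath_right
  refine ⟨p, q₂.reverse, q₁.reverse, ?_, fun v hv => ⟨?_, ?_⟩, fun v hv => ⟨?_, ?_⟩,
    fun v hv => ⟨?_, ?_⟩⟩
  · rw [hpq.walkChain_eq, walkChain_append, walkChain_reverse, walkChain_reverse, add_assoc,
      add_comm (walkChain q₁)]
  · exact (hpq.mem_support_iff v).2 (Or.inl hv)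
  · rintro rfl
    exact (hpq.eq_or_eq v hv hzq).elim hxz.symm hyz.symm
  · rw [Walk.support_reverse, List.mem_reverse] at hv
    exact (hpq.mem_support_iff v).2 (Or.inr (Walk.mem_support_append_iff _ _ |>.2 (Or.inr hv)))
  · rw [Walk.support_reverse, List.mem_reverse] at hv
    rintro rfl
    exact hq.ne_of_mem_support_of_append hxz q₁.start_mem_support hv rfl
  · rw [Walk.support_reverse, List.mem_reverse] at hv
    exact (hpq.mem_support_iff v).2 (Or.inr (Walk.mem_support_append_iff _ _ |>.2 (Or.inl hv)))
  · rw [Walk.support_reverse, List.mem_reverse] at hv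
    exact hq.ne_of_mem_support_of_append hyz hv q₂.end_mem_support

lemma walkChain_mem_of_not_isChordless {W : Submodule (ZMod 2) (Sym2 V → ZMod 2)}
    {c : G.Walk w w} (hc : c.IsCycle) (hchord : ¬ c.IsChordless)
    (h : ∀ (v : V) (c' : G.Walk v v), (∀ x ∈ c'.support, x ∈ c.support) →
      (∃ x ∈ c.support, x ∉ c'.support) → walkChain c' ∈ W) : walkChain c ∈ W := by
  simp only [Walk.isChordless_iff_forall_mem_edges, not_forall] at hchord
  obtain ⟨x, y, hx, hy, hxy, he⟩ := hchord
  have hhalf : ∀ p q : G.Walk x y, IsSplitting c p q →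
      walkChain (Walk.cons hxy.symm p) ∈ W := by
    intro p q hpq
    refine h y (Walk.cons hxy.symm p) (fun v hv => ?_) ?_
    · rcases List.mem_cons.1 hv with rfl | hv
      exacts [hy, (hpq.mem_support_iff v).2 (Or.inl hv)]
    · obtain ⟨v, hv⟩ := Set.nonempty_iff_ne_empty.2 fun h => he (hpq.mem_edges_iff.2
        (Or.inr ((pathInterior_eq_empty_iff hpq.isPath_right hxy.ne).1 h)))
      refine ⟨v, (hpq.mem_support_iff v).2 (Or.inr hv.1), fun hvp => ?_⟩
      rcases List.mem_cons.1 hvp with rfl | hvp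
      exacts [hv.2.2 rfl, (hpq.eq_or_eq v hvp hv.1).elim hv.2.1 hv.2.2]
  obtain ⟨p, q, hpq⟩ := exists_isSplitting hc hx hy hxy.ne
  have hsum := W.add_mem (hhalf p q hpq) (hhalf q p hpq.symm)
  rwa [walkChain_cons, walkChain_cons, add_add_add_comm, ZModModule.add_self, zero_add,
    ← hpq.walkChain_eq] at hsum

lemma exists_forall_mem_edges_eq_or_eq {c : G.Walk w w} (hc : c.IsCycle) (hx : x ∈ c.support) :
    ∃ a b, ∀ v, s(x, v) ∈ c.edges → v = a ∨ v = b := by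
  obtain ⟨a, b, -, hab⟩ := Set.ncard_eq_two.1 (hc.ncard_neighborSet_toSubgraph_eq_two hx)
  refine ⟨a, b, fun v hv => ?_⟩
  have hmem : v ∈ c.toSubgraph.neighborSet x := c.mem_edges_toSubgraph.2 hv
  simpa [hab] using hmem

lemma support_subset_of_isChordless {c : G.Walk u u} {c' : G.Walk v v} (hc : c.IsCycle)
    (hc' : c'.IsCycle) (hchord : c'.IsChordless) (hsub : ∀ x ∈ c.support, x ∈ c'.support) :
    ∀ x ∈ c'.support, x ∈ c.support := by
  by_contra! hne
  obtain ⟨x, hx, y, ⟨hy, hyc⟩, hxy⟩ := touches_diff_of_preconnected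
    c'.connected_induce_support.preconnected hsub ⟨u, c.start_mem_support⟩ hne
  have hnbr : c.toSubgraph.neighborSet x ⊆ c'.toSubgraph.neighborSet x := fun z hz => by
    have hz' : s(x, z) ∈ c.edges := c.mem_edges_toSubgraph.1 hz
    exact c'.mem_edges_toSubgraph.2 (hchord.mem_edges (hsub x hx)
      (hsub z (c.snd_mem_support_of_mem_edges hz')) (c.edges_subset_edgeSet hz'))
  have hcard : (c'.toSubgraph.neighborSet x).ncard = 2 :=
    hc'.ncard_neighborSet_toSubgraph_eq_two (hsub x hx)
  have heq := Set.eq_of_subset_of_ncard_le hnbr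
    (by rw [hcard, hc.ncard_neighborSet_toSubgraph_eq_two hx])
    (Set.finite_of_ncard_ne_zero (by simp [hcard]))
  have hy' : y ∈ c.toSubgraph.neighborSet x :=
    heq ▸ c'.mem_edges_toSubgraph.2 (hchord.mem_edges (hsub x hx) hy hxy)
  exact hyc (c.snd_mem_support_of_mem_edges (c.mem_edges_toSubgraph.1 hy'))

lemma connected_support_diff_singleton {c : G.Walk w w} (hc : c.IsCycle) (hx : x ∈ c.support) :
    (G.induce ({v | v ∈ c.support} \ {x})).Connected := by
  classical
  have hcyc := (Walk.isCycle_rotate hx).2 hc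
  have hset : {v | v ∈ c.support} = {v | v ∈ (c.rotate x hx).support} := by
    ext v
    exact (c.mem_support_rotate_iff x hx).symm
  rw [hset]
  cases hrot : c.rotate x hx with
  | nil => simp [hrot] at hcyc
  | cons h p =>
    rw [hrot, Walk.cons_isCycle_iff] at hcyc
    have hset' : {v | v ∈ (Walk.cons h p).support} = {v | v ∈ p.reverse.support} := by
      ext v
      simpa using fun hv : v = x => hv ▸ p.end_mem_support
    exact hset' ▸ connected_support_diff_start hcyc.1.reverse h.ne

lemma exists_walk_of_preconnected (hA : (G.induce A).Preconnected) (hu : u ∈ A) (hv : v ∈ A) :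
    ∃ p : G.Walk u v, ∀ x ∈ p.support, x ∈ A := by
  obtain ⟨p⟩ := hA ⟨u, hu⟩ ⟨v, hv⟩
  let p' : G.Walk u v := p.map (Embedding.induce A).toHom
  refine ⟨p', fun x hx => ?_⟩
  obtain ⟨y, -, rfl⟩ := List.mem_map.1 (p.support_map _ ▸ hx)
  exact y.2

lemma IsLink.exists_walk (hK : IsLink G a b K) :
    ∃ p : G.Walk a b, s(a, b) ∉ p.edges ∧ ∀ x ∈ p.support, x ∈ insert a (insert b K) := by
  obtain ⟨k, hk, hak⟩ : ∃ k ∈ K, G.Adj a k := by simpa [Touches] using hK.touches_left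
  obtain ⟨l, hl, hbl⟩ : ∃ l ∈ K, G.Adj b l := by simpa [Touches] using hK.touches_right
  obtain ⟨p, hp⟩ := exists_walk_of_preconnected hK.connected.preconnected hk hl
  refine ⟨Walk.cons hak (p.concat hbl.symm), fun he => ?_, fun x hx => ?_⟩
  · have ha := hK.left_notMem
    have hb := hK.right_notMem
    have hle : s(a, b) ∉ p.edges := fun h => ha (hp a (p.fst_mem_support_of_mem_edges h))
    rw [Walk.edges_cons, Walk.edges_concat] at he
    aesop
  · simp only [Walk.support_cons, Walk.support_concat, List.mem_cons, List.mem_append] at hx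
    have := hp x
    aesop

lemma exists_isCycle_of_isLink (hK : IsLink G a b K) (hab : G.Adj a b) :
    ∃ (v : V) (c : G.Walk v v), c.IsCycle ∧ ∀ x ∈ c.support, x ∈ insert a (insert b K) := by
  classical
  obtain ⟨p, hp, hpK⟩ := hK.exists_walk
  refine ⟨b, Walk.cons hab.symm p.bypass, (Walk.cons_isCycle_iff _ _).2 ⟨p.bypass_isPath, ?_⟩, ?_⟩
  · rw [Sym2.eq_swap]
    exact fun h => hp (p.edges_bypass_subset_edges h)
  · intro x hx
    rcases List.mem_cons.1 hx with rfl | hx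
    exacts [by simp, hpK x (p.support_bypass_subset_support hx)]

end Cycles

/-! ### Tutte's theorem on peripheral cycles -/

section Tutte

variable {w : V} {D : Set V} {W : Submodule (ZMod 2) (Sym2 V → ZMod 2)}

/-- Deleting `X` separates the support of `G` into the nonempty parts `A` and `B`, which no edge
joins. -/
structure IsSeparation (G : SimpleGraph V) (X A B : Set V) : Prop where
  subset_support : X ⊆ G.support
  left_nonempty : A.Nonempty
  right_nonempty : B.Nonempty
  disjoint : Disjoint A B
  union_eq : A ∪ B = G.support \ X
  not_touches : ¬ Touches G A B

/-- `G` is 3-connected up to isolated vertices: no two vertices separate its support and every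
vertex of the support has three neighbours. -/
structure IsTriconnected (G : SimpleGraph V) : Prop where
  not_isSeparation : ∀ ⦃X A B : Set V⦄, X.ncard ≤ 2 → ¬ IsSeparation G X A B
  exists_adj : ∀ v ∈ G.support, ∀ a b, ∃ x, G.Adj v x ∧ x ≠ a ∧ x ≠ b

/-- A peripheral cycle in the sense of Tutte: it has no chord and does not separate the graph. The
peripheral cycles of a 3-connected planar graph are the boundaries of its faces. -/
structure IsPeripheral (c : G.Walk w w) : Prop where
  isCycle : c.IsCycle
  isChordless : c.IsChordless
  connected_diff : (G.induce (G.support \ {v | v ∈ c.support})).Connected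

/-- The vertices outside `B` with a neighbour in `B`. -/
def outerBoundary (G : SimpleGraph V) (B : Set V) : Set V := {v | v ∉ B ∧ Touches G B {v}}

lemma mem_support_of_isCycle {c : G.Walk w w} (hc : c.IsCycle) (hv : v ∈ c.support) :
    v ∈ G.support := by
  obtain ⟨e, he, hve⟩ := (Walk.mem_support_iff_exists_mem_edges_of_not_nil hc.not_nil).1 hv
  obtain ⟨x, rfl⟩ := hve
  exact ⟨x, c.edges_subset_edgeSet he⟩

lemma IsTriconnected.exists_adj_notMem_edges (hG : IsTriconnected G) {c : G.Walk w w}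
    (hc : c.IsCycle) (hv : v ∈ c.support) : ∃ x, G.Adj v x ∧ s(v, x) ∉ c.edges := by
  obtain ⟨a, b, hab⟩ := exists_forall_mem_edges_eq_or_eq hc hv
  obtain ⟨x, hvx, hxa, hxb⟩ := hG.exists_adj v (mem_support_of_isCycle hc hv) a b
  exact ⟨x, hvx, fun h => (hab x h).elim hxa hxb⟩

lemma walkChain_mem_of_three_touches {c : G.Walk w w} (hc : c.IsCycle)
    (hD : (G.induce D).Connected) {x y z : V} (hx : x ∈ c.support) (hy : y ∈ c.support)
    (hz : z ∈ c.support) (hxy : x ≠ y) (hxz : x ≠ z) (hyz : y ≠ z) (hxD : x ∈ outerBoundary G D)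
    (hyD : y ∈ outerBoundary G D) (hzD : z ∈ outerBoundary G D)
    (h : ∀ v ∈ ({x, y, z} : Set V), ∀ (u : V) (c' : G.Walk u u),
      (∀ t ∈ c'.support, (t ∈ c.support ∨ t ∈ D) ∧ t ≠ v) → walkChain c' ∈ W) :
    walkChain c ∈ W := by
  obtain ⟨d, hd⟩ := nonempty_of_connected hD
  have hleg : ∀ n ∈ outerBoundary G D, ∃ p : G.Walk d n, ∀ t ∈ p.support, t ∈ insert n D :=
    fun n hn => exists_walk_of_preconnected (connected_insert hD hn.2).preconnected (Or.inr hd)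
      (Or.inl rfl)
  have hclosed : ∀ n ∈ c.support, ∀ m ∈ c.support, ∀ k ∈ ({x, y, z} : Set V),
      k ∈ outerBoundary G D → n ≠ k → m ≠ k → ∀ (p : G.Walk n m) (pn : G.Walk d n)
      (pm : G.Walk d m), (∀ t ∈ p.support, t ∈ c.support ∧ t ≠ k) →
      (∀ t ∈ pn.support, t ∈ insert n D) → (∀ t ∈ pm.support, t ∈ insert m D) →
      walkChain p + walkChain pm + walkChain pn ∈ W := by
    intro n hn m hm k hk hkD hnk hmk p pn pm hp hpn hpm
    have hmem := h k hk n ((p.append pm.reverse).append pn) fun t ht => by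
      simp only [Walk.mem_support_append_iff, Walk.support_reverse, List.mem_reverse] at ht
      rcases ht with (ht | ht) | ht
      · exact ⟨Or.inl (hp t ht).1, (hp t ht).2⟩
      · rcases hpm t ht with rfl | htD
        exacts [⟨Or.inl hm, hmk⟩, ⟨Or.inr htD, fun htk => hkD.1 (htk ▸ htD)⟩]
      · rcases hpn t ht with rfl | htD
        exacts [⟨Or.inl hn, hnk⟩, ⟨Or.inr htD, fun htk => hkD.1 (htk ▸ htD)⟩]
    rwa [walkChain_append, walkChain_append, walkChain_reverse] at hmem
  obtain ⟨p, q, r, hpqr, hp, hq, hr⟩ := exists_three_arcs hc hx hy hz hxy hxz hyz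
  obtain ⟨px, hpx⟩ := hleg x hxD
  obtain ⟨py, hpy⟩ := hleg y hyD
  obtain ⟨pz, hpz⟩ := hleg z hzD
  have hsum := W.add_mem (W.add_mem
    (hclosed x hx y hy z (by simp) hzD hxz hyz p px py hp hpx hpy)
    (hclosed y hy z hz x (by simp) hxD hxy.symm hxz.symm q py pz hq hpy hpz))
    (hclosed z hz x hx y (by simp) hyD hyz.symm hxy r pz px hr hpz hpx)
  rw [hpqr]
  convert hsum using 1
  linear_combination -ZModModule.add_self (walkChain px) - ZModModule.add_self (walkChain py) -
    ZModModule.add_self (walkChain pz)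

lemma IsTriconnected.exists_connected_three_le_ncard_outerBoundary [Finite V]
    (hG : IsTriconnected G) (hB : B.Nonempty) (hBS : B ⊆ G.support)
    (hne : (G.support \ (B ∪ outerBoundary G B)).Nonempty) :
    ∃ D, Disjoint D B ∧ (G.induce D).Connected ∧ outerBoundary G D ⊆ outerBoundary G B ∧
      3 ≤ (outerBoundary G D).ncard := by
  obtain ⟨d, hd⟩ := hne
  obtain ⟨D, hdD, hDS, hD, hcl⟩ := exists_component (G := G) hd
  have hDB : Disjoint D B := Set.disjoint_left.2 fun x hx hxB => (hDS hx).2 (Or.inl hxB)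
  have hsub : outerBoundary G D ⊆ outerBoundary G B := by
    rintro v ⟨hvD, hv'⟩
    obtain ⟨x, hx, hxv⟩ : ∃ x ∈ D, G.Adj x v := by simpa [Touches] using hv'
    by_contra hv
    have hvB : v ∉ B := fun hvB => (hDS hx).2
      (Or.inr ⟨Set.disjoint_left.1 hDB hx, v, hvB, x, rfl, hxv.symm⟩)
    exact hvD (hcl hx ⟨⟨x, hxv.symm⟩, fun h => h.elim hvB hv⟩ hxv)
  refine ⟨D, hDB, hD, hsub, ?_⟩
  by_contra! hcard
  refine hG.not_isSeparation (Nat.le_of_lt_succ hcard)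
    (A := D) (B := G.support \ (D ∪ outerBoundary G D)) ⟨?_, ⟨d, hdD⟩, ?_, ?_, ?_, ?_⟩
  · exact hsub.trans fun v hv => let ⟨x, _, _, hv', hxv⟩ := hv.2; ⟨x, hv' ▸ hxv.symm⟩
  · exact hB.mono fun x hx => ⟨hBS hx, fun h => h.elim (Set.disjoint_right.1 hDB hx)
      fun h => (hsub h).1 hx⟩
  · exact Set.disjoint_left.2 fun x hx h => h.2 (Or.inl hx)
  · ext x
    by_cases hx : x ∈ D
    · simp [hx, (hDS hx).1, outerBoundary]
    · simp [hx]
  · rintro ⟨x, hx, y, hy, hxy⟩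
    exact hy.2 (Or.inr ⟨fun h => hy.2 (Or.inl h), x, hx, y, rfl, hxy⟩)

lemma IsTriconnected.walkChain_mem_of_forall_outerBoundary [Finite V] (hG : IsTriconnected G)
    (hW : ∀ (v : V) (c : G.Walk v v), IsPeripheral c → walkChain c ∈ W)
    (hB : (G.induce B).Connected) (hBS : B ⊆ G.support) {c : G.Walk w w} (hc : c.IsCycle)
    (hcB : ∀ x ∈ c.support, x ∉ B)
    (h : ∀ v ∈ outerBoundary G B, ∀ (u : V) (c' : G.Walk u u),
      (∀ x ∈ c'.support, x ∉ B ∧ x ≠ v) → walkChain c' ∈ W) : walkChain c ∈ W := by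
  by_cases hN : ∀ v ∈ outerBoundary G B, v ∈ c.support
  swap
  · push Not at hN
    obtain ⟨v, hv, hvc⟩ := hN
    exact h v hv w c fun x hx => ⟨hcB x hx, fun hxv => hvc (hxv ▸ hx)⟩
  rcases (G.support \ (B ∪ outerBoundary G B)).eq_empty_or_nonempty with hempty | hne
  · rw [Set.sdiff_eq_empty] at hempty
    have hcN : ∀ x ∈ c.support, x ∈ outerBoundary G B := fun x hx =>
      (hempty (mem_support_of_isCycle hc hx)).resolve_left (hcB x hx)
    by_cases hchord : c.IsChordless
    · have hset : G.support \ {v | v ∈ c.support} = B := by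
        ext x
        exact ⟨fun hx => (hempty hx.1).resolve_right fun h => hx.2 (hN x h),
          fun hx => ⟨hBS hx, fun h => hcB x h hx⟩⟩
      exact hW w c ⟨hc, hchord, hset ▸ hB⟩
    · refine walkChain_mem_of_not_isChordless hc hchord fun u c' hc' ⟨v, hv, hvc'⟩ => ?_
      exact h v (hcN v hv) u c' fun x hx => ⟨hcB x (hc' x hx), fun hxv => hvc' (hxv ▸ hx)⟩
  · obtain ⟨D, hDB, hD, hDN, hcard⟩ := hG.exists_connected_three_le_ncard_outerBoundary
      (nonempty_of_connected hB) hBS hne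
    obtain ⟨x, y, z, hx, hy, hz, hxy, hxz, hyz⟩ := (Set.two_lt_ncard_iff).1 hcard
    refine walkChain_mem_of_three_touches hc hD (hN x (hDN hx)) (hN y (hDN hy)) (hN z (hDN hz))
      hxy hxz hyz hx hy hz fun v hv u c' hc' => ?_
    have hvN : v ∈ outerBoundary G B := by
      rcases hv with rfl | rfl | rfl
      exacts [hDN hx, hDN hy, hDN hz]
    exact h v hvN u c' fun t ht =>
      ⟨(hc' t ht).1.elim (hcB t) fun h => Set.disjoint_left.1 hDB h, (hc' t ht).2⟩

lemma IsTriconnected.walkChain_mem_of_disjoint [Finite V] (hG : IsTriconnected G)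
    (hW : ∀ (v : V) (c : G.Walk v v), IsPeripheral c → walkChain c ∈ W)
    (hB : (G.induce B).Connected) (hBS : B ⊆ G.support) (c : G.Walk w w)
    (hcB : ∀ x ∈ c.support, x ∉ B) : walkChain c ∈ W := by
  have := Fintype.ofFinite V
  induction hn : (G.support \ B).ncard using Nat.strong_induction_on generalizing B w c with
  | _ n ih
  subst hn
  refine mem_of_forall_isCycle (walkChain_mem_cycleSpace c) fun x c' hc' hc'c => ?_
  refine hG.walkChain_mem_of_forall_outerBoundary hW hB hBS hc' (fun y hy => ?_)
    fun v ⟨hvB, hv⟩ u c'' hc'' => ?_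
  · obtain ⟨e, he, hye⟩ := (Walk.mem_support_iff_exists_mem_edges_of_not_nil hc'.not_nil).1 hy
    exact hcB y (c.mem_support_of_mem_edges (support_walkChain_subset c (hc'c e he)) hye)
  · have hvS : v ∈ G.support := let ⟨z, _, _, hv', hzv⟩ := hv; ⟨z, hv' ▸ hzv.symm⟩
    refine ih _ (Set.ncard_lt_ncard ?_ (Set.toFinite _)) (connected_insert hB hv)
      (Set.insert_subset hvS hBS) c'' (fun y hy => ?_) rfl
    · exact Set.ssubset_iff_exists.2 ⟨Set.sdiff_subset_sdiff_right (Set.subset_insert v B),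
        v, ⟨hvS, hvB⟩, fun h => h.2 (Set.mem_insert v B)⟩
    · exact fun h => h.elim (hc'' y hy).2 (hc'' y hy).1

lemma IsTriconnected.cycleSpace_le_of_forall_isPeripheral [Fintype V] (hG : IsTriconnected G)
    (hW : ∀ (v : V) (c : G.Walk v v), IsPeripheral c → walkChain c ∈ W) : cycleSpace G ≤ W := by
  have hmiss : ∀ (u : V) (c : G.Walk u u), (∃ v ∈ G.support, v ∉ c.support) → walkChain c ∈ W :=
    fun u c ⟨v, hv, hvc⟩ => hG.walkChain_mem_of_disjoint hW (connected_singleton G v)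
      (Set.singleton_subset_iff.2 hv) c fun x hx hxv => hvc (hxv ▸ hx)
  refine fun z hz => mem_of_forall_isCycle hz fun v c hc _ => ?_
  by_cases hcS : ∃ x ∈ G.support, x ∉ c.support
  · exact hmiss v c hcS
  push Not at hcS
  obtain ⟨x, hvx, he⟩ := hG.exists_adj_notMem_edges hc c.start_mem_support
  have hchord : ¬ c.IsChordless := fun h =>
    he (h.mem_edges c.start_mem_support (hcS x ⟨v, hvx.symm⟩) hvx)
  refine walkChain_mem_of_not_isChordless hc hchord fun u c' _ ⟨y, hy, hyc'⟩ => ?_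
  exact hmiss u c' ⟨y, mem_support_of_isCycle hc hy, hyc'⟩

end Tutte

/-! ### Peripheral cycles in planar graphs -/

section Peripheral

variable {w w' x y : V} {X : Set V} {c : G.Walk w w} {c' : G.Walk w' w'} {p q : G.Walk x y}

lemma subset_of_isClosedIn (hA : (G.induce A).Preconnected) (hAS : A ⊆ S)
    (hK : IsClosedIn G K S) (h : (A ∩ K).Nonempty) : A ⊆ K := by
  by_contra hAK
  obtain ⟨v, hv, hvK⟩ := Set.not_subset.1 hAK
  obtain ⟨z, hz, t, ht, hzt⟩ := touches_diff_of_preconnected hA Set.inter_subset_left h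
    ⟨v, hv, fun h => hvK h.2⟩
  exact ht.2 ⟨ht.1, hK hz.2 (hAS ht.1) hzt⟩

lemma exists_component_diff_touches [Finite V] (hS : (G.induce S).Preconnected)
    (hX : (S ∩ X).Nonempty) (hA : (G.induce A).Connected) (hAS : A ⊆ S \ X) :
    ∃ K, A ⊆ K ∧ K ⊆ S \ X ∧ (G.induce K).Connected ∧ IsClosedIn G K (S \ X) ∧
      Touches G K (S ∩ X) := by
  obtain ⟨K, hAK, hKS, hK, hcl⟩ := exists_component_of_connected hA hAS
  obtain ⟨z, hz, t, ht, hzt⟩ := touches_diff_of_preconnected hS (hKS.trans Set.sdiff_subset)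
    (nonempty_of_connected hK) (hX.mono fun v hv => ⟨hv.1, fun h => (hKS h).2 hv.2⟩)
  refine ⟨K, hAK, hKS, hK, hcl, z, hz, t, ⟨ht.1, ?_⟩, hzt⟩
  by_contra htX
  exact ht.2 (hcl hz ⟨ht.1, htX⟩ hzt)

lemma walkChain_eq_of_support_subset (hc : c.IsCycle) (hchord : c.IsChordless) (hc' : c'.IsCycle)
    (hchord' : c'.IsChordless) (hsub : ∀ x ∈ c.support, x ∈ c'.support) :
    walkChain c = walkChain c' := by
  have hsub' := support_subset_of_isChordless hc hc' hchord' hsub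
  have hiff : ∀ e, e ∈ c.edges ↔ e ∈ c'.edges := fun e => by
    induction e with
    | _ u v
    refine ⟨fun h => ?_, fun h => ?_⟩
    · exact hchord'.mem_edges (hsub _ (c.fst_mem_support_of_mem_edges h))
        (hsub _ (c.snd_mem_support_of_mem_edges h)) (c.adj_of_mem_edges h)
    · exact hchord.mem_edges (hsub' _ (c'.fst_mem_support_of_mem_edges h))
        (hsub' _ (c'.snd_mem_support_of_mem_edges h)) (c'.adj_of_mem_edges h)
  classical
  ext e
  by_cases he : e ∈ c.edges
  · rw [walkChain_eq_one c hc.isTrail he, walkChain_eq_one c' hc'.isTrail ((hiff e).1 he)]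
  · simp [walkChain, List.count_eq_zero_of_not_mem he,
      List.count_eq_zero_of_not_mem (mt (hiff e).2 he)]

lemma IsSplitting.not_touches_pathInterior (h : IsSplitting c p q) (hchord : c.IsChordless) :
    ¬ Touches G (pathInterior p) (pathInterior q) := by
  rintro ⟨u, hu, v, hv, huv⟩
  have hdisj := Set.disjoint_left.1 h.disjoint_pathInterior
  rcases h.mem_edges_iff.1 (hchord.mem_edges ((h.mem_support_iff u).2 (Or.inl hu.1))
    ((h.mem_support_iff v).2 (Or.inr hv.1)) huv) with he | he
  · exact hdisj ⟨p.snd_mem_support_of_mem_edges he, hv.2⟩ hv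
  · exact hdisj hu ⟨q.fst_mem_support_of_mem_edges he, hu.2⟩

lemma exists_isLink_of_isChordless [Finite V] (hc : c.IsCycle) (hchord : c.IsChordless)
    (hA : 2 < ({v | v ∈ c.support} ∩ A).ncard) (hu : u ∈ c.support) (huA : u ∉ A) :
    ∃ x ∈ {v | v ∈ c.support} ∩ A, ∃ y ∈ {v | v ∈ c.support} ∩ A, x ≠ y ∧ ¬ G.Adj x y ∧
      ∃ X ⊆ {v | v ∈ c.support} \ A, IsLink G x y X := by
  have hpick : ∀ a b, ∃ z ∈ {v | v ∈ c.support} ∩ A, z ≠ a ∧ z ≠ b := fun a b => by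
    obtain ⟨z, hz, hzab⟩ := Set.exists_mem_notMem_of_ncard_lt_ncard
      ((Set.ncard_insert_le a {b}).trans_lt (by simpa using hA))
    exact ⟨z, hz, by simpa using hzab⟩
  obtain ⟨X, huX, hXS, hX, hcl⟩ := exists_component (G := G) (S := {v | v ∈ c.support} \ A)
    ⟨hu, huA⟩
  have hleave : ∀ S ⊆ {v | v ∈ c.support}, (G.induce S).Connected → X ⊆ S → (S ∩ A).Nonempty →
      ∃ z ∈ S ∩ A, Touches G {z} X := by
    rintro S hS hconn hXS' ⟨t, htS, htA⟩
    obtain ⟨s, hs, z, hz, hsz⟩ := touches_diff_of_preconnected hconn.preconnected hXS' ⟨u, huX⟩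
      ⟨t, htS, fun h => (hXS h).2 htA⟩
    have hzA : z ∈ A := by_contra fun hzA => hz.2 (hcl hs ⟨hS hz.1, hzA⟩ hsz)
    exact ⟨z, ⟨hz.1, hzA⟩, z, rfl, s, hs, hsz.symm⟩
  obtain ⟨t, ht, -⟩ := hpick u u
  obtain ⟨x, hx, hxX⟩ := hleave _ subset_rfl c.connected_induce_support
    (hXS.trans Set.sdiff_subset) ⟨t, ht⟩
  obtain ⟨t, ht, htx, -⟩ := hpick x x
  obtain ⟨y, ⟨⟨hyc, hyx⟩, hyA⟩, hyX⟩ := hleave _ Set.sdiff_subset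
    (connected_support_diff_singleton hc hx.1)
    (fun v hv => ⟨(hXS hv).1, fun h => (hXS hv).2 (h ▸ hx.2)⟩) ⟨t, ⟨ht.1, htx⟩, ht.2⟩
  have hlink : IsLink G x y X :=
    ⟨hX, fun h => (hXS h).2 hx.2, fun h => (hXS h).2 hyA, hxX, hyX⟩
  refine ⟨x, hx, y, ⟨hyc, hyA⟩, Ne.symm hyx, fun hxy => ?_, X, hXS, hlink⟩
  obtain ⟨v, d, hd, hdX⟩ := exists_isCycle_of_isLink hlink hxy
  obtain ⟨z, hz, hzx, hzy⟩ := hpick x y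
  have hdc : ∀ t ∈ d.support, t ∈ c.support := fun t ht => by
    rcases hdX t ht with rfl | rfl | h
    exacts [hx.1, hyc, (hXS h).1]
  rcases hdX z (support_subset_of_isChordless hd hc hchord hdc z hz.1) with h | h | h
  exacts [hzx h, hzy h, (hXS h).2 hz.2]

lemma IsTriconnected.exists_connected_touches_of_subset [Finite V] (hG : IsTriconnected G)
    (hc : IsPeripheral c) (hc' : IsPeripheral c') (h : IsSplitting c p q) (hx : x ∈ c'.support)
    (hy : y ∈ c'.support) (hsub : ¬ {v | v ∈ c.support} ⊆ {v | v ∈ c'.support})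
    (hp : (pathInterior p).Nonempty) (hpc' : pathInterior p ⊆ {v | v ∈ c'.support}) :
    ∃ K ⊆ G.support \ ({v | v ∈ c.support} ∪ {v | v ∈ c'.support}), (G.induce K).Connected ∧
      Touches G K (pathInterior p) ∧ Touches G K (pathInterior q) := by
  have hmem : ∀ v ∈ c.support, v ∉ c'.support → v ∈ pathInterior q := fun v hv hv' => by
    have hvpq : v ∈ pathInterior p ∪ pathInterior q := by
      rw [h.pathInterior_union]
      exact ⟨hv, fun hvxy => hv' (by rcases hvxy with rfl | rfl; exacts [hx, hy])⟩
    exact hvpq.resolve_left fun h => hv' (hpc' h)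
  obtain ⟨t, htc, htc'⟩ := Set.not_subset.1 hsub
  obtain ⟨u, hu⟩ := hp
  obtain ⟨k, huk, hk⟩ := hG.exists_adj_notMem_edges hc'.isCycle (hpc' hu)
  have hkc' : k ∉ c'.support := fun h => hk (hc'.isChordless.mem_edges (hpc' hu) h huk)
  have hkc : k ∉ c.support := fun hkc =>
    h.not_touches_pathInterior hc.isChordless ⟨u, hu, k, hmem k hkc hkc', huk⟩
  obtain ⟨K, hkK, hKS, hK, -, hKt⟩ := exists_component_diff_touches
    (X := {v | v ∈ c.support}) hc'.connected_diff.preconnected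
    ⟨t, ⟨mem_support_of_isCycle hc.isCycle htc, htc'⟩, htc⟩ (connected_singleton G k)
    (Set.singleton_subset_iff.2 ⟨⟨⟨u, huk.symm⟩, hkc'⟩, hkc⟩)
  refine ⟨K, fun v hv => ⟨(hKS hv).1.1, fun h => h.elim (hKS hv).2 (hKS hv).1.2⟩, hK,
    ⟨k, hkK rfl, u, hu, huk.symm⟩, hKt.mono subset_rfl fun v hv => hmem v hv.2 hv.1.2⟩

lemma IsTriconnected.exists_connected_touches_pathInterior [Finite V] (hG : IsTriconnected G)
    (hc : IsPeripheral c) (hc' : IsPeripheral c') (h : IsSplitting c p q) (hx : x ∈ c'.support)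
    (hy : y ∈ c'.support) (hsub : ¬ {v | v ∈ c.support} ⊆ {v | v ∈ c'.support})
    (hp : (pathInterior p).Nonempty) (hq : (pathInterior q).Nonempty) :
    ∃ K ⊆ G.support \ ({v | v ∈ c.support} ∪ {v | v ∈ c'.support}), (G.induce K).Connected ∧
      Touches G K (pathInterior p) ∧ Touches G K (pathInterior q) := by
  by_cases hpc' : pathInterior p ⊆ {v | v ∈ c'.support}
  · exact hG.exists_connected_touches_of_subset hc hc' h hx hy hsub hp hpc'
  by_cases hqc' : pathInterior q ⊆ {v | v ∈ c'.support}
  · obtain ⟨K, hKS, hK, hKq, hKp⟩ :=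
      hG.exists_connected_touches_of_subset hc hc' h.symm hx hy hsub hq hqc'
    exact ⟨K, hKS, hK, hKp, hKq⟩
  have hdiff : ∀ r ∈ ({pathInterior p, pathInterior q} : Set (Set V)),
      r \ {v | v ∈ c'.support} ⊆ G.support \ {v | v ∈ c'.support} := by
    rintro r hr v ⟨hv, hvc'⟩
    refine ⟨mem_support_of_isCycle hc.isCycle ((h.mem_support_iff v).2 ?_), hvc'⟩
    rcases hr with rfl | rfl
    exacts [Or.inl hv.1, Or.inr hv.1]
  obtain ⟨K, hKS, hK, hKp, hKq⟩ := exists_connected_touches hc'.connected_diff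
    (Set.nonempty_of_not_subset hpc') (Set.nonempty_of_not_subset hqc')
    (hdiff _ (by simp)) (hdiff _ (by simp))
    (h.disjoint_pathInterior.mono Set.sdiff_subset Set.sdiff_subset)
    fun ht => h.not_touches_pathInterior hc.isChordless
      (ht.mono Set.sdiff_subset Set.sdiff_subset)
  refine ⟨K, fun v hv => ⟨(hKS hv).1.1, ?_⟩, hK, hKp.mono subset_rfl Set.sdiff_subset,
    hKq.mono subset_rfl Set.sdiff_subset⟩
  have hvc' : v ∉ c'.support := (hKS hv).1.2
  rintro (hvc | hvc)
  · have hvpq : v ∈ pathInterior p ∪ pathInterior q := by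
      rw [h.pathInterior_union]
      exact ⟨hvc, fun hvxy => hvc' (by rcases hvxy with rfl | rfl; exacts [hx, hy])⟩
    exact (hKS hv).2 (hvpq.imp (⟨·, hvc'⟩) (⟨·, hvc'⟩))
  · exact hvc' hvc

lemma IsTriconnected.ncard_support_inter_le_two [Finite V] (hG : IsTriconnected G)
    (hplanar : G.IsPlanar) (hc : IsPeripheral c) (hc' : IsPeripheral c')
    (hne : walkChain c ≠ walkChain c') :
    ({v | v ∈ c.support} ∩ {v | v ∈ c'.support}).ncard ≤ 2 := by
  by_contra! hcard
  have hsub : ¬ {v | v ∈ c.support} ⊆ {v | v ∈ c'.support} := fun h => hne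
    (walkChain_eq_of_support_subset hc.isCycle hc.isChordless hc'.isCycle hc'.isChordless h)
  have hsub' : ¬ {v | v ∈ c'.support} ⊆ {v | v ∈ c.support} := fun h => hne.symm
    (walkChain_eq_of_support_subset hc'.isCycle hc'.isChordless hc.isCycle hc.isChordless h)
  obtain ⟨u, huc', huc⟩ := Set.not_subset.1 hsub'
  obtain ⟨x, ⟨hxc', hxc⟩, y, ⟨hyc', hyc⟩, hxy, hadj, X, hXc, hX⟩ :=
    exists_isLink_of_isChordless hc'.isCycle hc'.isChordless (Set.inter_comm _ _ ▸ hcard) huc' huc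
  obtain ⟨p, q, h⟩ := exists_isSplitting hc.isCycle hxc hyc hxy
  have hne : ∀ r : G.Walk x y, r.IsPath → (pathInterior r).Nonempty := fun r hr =>
    Set.nonempty_iff_ne_empty.2 fun hr' =>
      hadj (r.adj_of_mem_edges ((pathInterior_eq_empty_iff hr hxy).1 hr'))
  have hp := hne p h.isPath_left
  have hq := hne q h.isPath_right
  obtain ⟨K₀, hK₀S, hK₀, hK₀p, hK₀q⟩ :=
    hG.exists_connected_touches_pathInterior hc hc' h hxc' hyc' hsub hp hq
  obtain ⟨z, hz⟩ := nonempty_of_connected hX.connected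
  obtain ⟨K, hK₀K, hKS, hK, -, hKX⟩ := exists_component_diff_touches
    (X := X) hc.connected_diff.preconnected
    ⟨z, ⟨mem_support_of_isCycle hc'.isCycle (hXc hz).1, (hXc hz).2⟩, hz⟩ hK₀
    fun v hv => ⟨⟨(hK₀S hv).1, fun h => (hK₀S hv).2 (Or.inl h)⟩,
      fun h => (hK₀S hv).2 (Or.inr (hXc h).1)⟩
  have hpc : pathInterior p ⊆ {v | v ∈ c.support} := fun v hv => (h.mem_support_iff v).2 (.inl hv.1)
  have hqc : pathInterior q ⊆ {v | v ∈ c.support} := fun v hv => (h.mem_support_iff v).2 (.inr hv.1)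
  have hXc' : Disjoint {v | v ∈ c.support} X := Set.disjoint_sdiff_right.mono_right hXc
  have hKc : Disjoint K {v | v ∈ c.support} :=
    Set.disjoint_left.2 fun v hv hvc => (hKS hv).1.2 hvc
  refine not_isPlanar_of_three_links hxy hX (isLink_pathInterior h.isPath_left hp)
    (isLink_pathInterior h.isPath_right hq) (hXc'.mono_left hpc).symm (hXc'.mono_left hqc).symm
    h.disjoint_pathInterior hK (fun hxK => (hKS hxK).1.2 hxc) (fun hyK => (hKS hyK).1.2 hyc)
    (Set.disjoint_left.2 fun v hv => (hKS hv).2) (hKc.mono_right hpc) (hKc.mono_right hqc)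
    (hKX.mono subset_rfl Set.inter_subset_right) (hK₀p.mono hK₀K subset_rfl)
    (hK₀q.mono hK₀K subset_rfl) hplanar

lemma isLink_support_diff_of_mem_edges (hc : c.IsCycle) (he : s(x, y) ∈ c.edges) :
    IsLink G x y ({v | v ∈ c.support} \ {x, y}) := by
  have hxy := (c.adj_of_mem_edges he).ne
  obtain ⟨p, q, h⟩ := exists_isSplitting hc (c.fst_mem_support_of_mem_edges he)
    (c.snd_mem_support_of_mem_edges he) hxy
  wlog hp : s(x, y) ∈ p.edges generalizing p q
  · exact this q p h.symm ((h.mem_edges_iff.1 he).resolve_left hp)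
  have hq : s(x, y) ∉ q.edges :=
    List.disjoint_of_nodup_append (h.edges_perm.nodup hc.isTrail.edges_nodup) hp
  rw [← h.pathInterior_union, (pathInterior_eq_empty_iff h.isPath_left hxy).2 hp, Set.empty_union]
  exact isLink_pathInterior h.isPath_right
    (Set.nonempty_iff_ne_empty.2 (mt (pathInterior_eq_empty_iff h.isPath_right hxy).1 hq))

lemma disjoint_diff_pair_of_ncard_inter_le_two [Finite V] {A B : Set V} (hxy : x ≠ y)
    (hx : x ∈ A ∩ B) (hy : y ∈ A ∩ B) (h : (A ∩ B).ncard ≤ 2) :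
    Disjoint (A \ {x, y}) (B \ {x, y}) := by
  have hAB : {x, y} = A ∩ B := Set.eq_of_subset_of_ncard_le
    (Set.insert_subset hx (Set.singleton_subset_iff.2 hy)) (by rwa [Set.ncard_pair hxy])
  rw [hAB]
  exact Set.disjoint_left.2 fun v hvA hvB => hvA.2 ⟨hvA.1, hvB.1⟩

lemma exists_connected_touches_of_isClosedIn {P R R' : Set V} (hSR : (G.induce (S \ R)).Connected)
    (hP : P.Nonempty) (hQ : Q.Nonempty) (hPS : P ⊆ S \ R) (hQS : Q ⊆ S \ R) (hPQ : Disjoint P Q)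
    (hPcl : IsClosedIn G P ((S \ Q) \ R')) (hRcl : IsClosedIn G R' ((S \ P) \ Q))
    (ht : ¬ Touches G P Q) :
    ∃ K ⊆ R' \ R, (G.induce K).Connected ∧ Touches G K P ∧ Touches G K Q := by
  obtain ⟨K, hKS, hK, hKP, hKQ⟩ := exists_connected_touches hSR hP hQ hPS hQS hPQ ht
  have hKR' : K ⊆ R' := by
    refine subset_of_isClosedIn hK.preconnected (fun v hv => ?_) hRcl ?_
    · exact ⟨⟨(hKS hv).1.1, fun h => (hKS hv).2 (Or.inl h)⟩, fun h => (hKS hv).2 (Or.inr h)⟩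
    · obtain ⟨v, hv, z, hz, hvz⟩ := hKP
      refine ⟨v, hv, by_contra fun hvR' => (hKS hv).2 (Or.inl ?_)⟩
      exact hPcl hz ⟨⟨(hKS hv).1.1, fun h => (hKS hv).2 (Or.inr h)⟩, hvR'⟩ hvz.symm
  exact ⟨K, fun v hv => ⟨hKR' hv, (hKS hv).1.2⟩, hK, hKP, hKQ⟩

lemma not_isPlanar_of_three_nonseparating_links [Finite V] {P Q R : Set V} (hxy : G.Adj x y)
    (hP : IsLink G x y P) (hQ : IsLink G x y Q) (hR : IsLink G x y R) (hx : x ∉ S) (hy : y ∉ S)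
    (hPS : P ⊆ S) (hQS : Q ⊆ S) (hRS : R ⊆ S) (hPQ : Disjoint P Q) (hPR : Disjoint P R)
    (hQR : Disjoint Q R) (hSP : (G.induce (S \ P)).Connected) (hSQ : (G.induce (S \ Q)).Connected)
    (hSR : (G.induce (S \ R)).Connected) : ¬ G.IsPlanar := by
  obtain ⟨q, hq⟩ := nonempty_of_connected hQ.connected
  obtain ⟨r, hr⟩ := nonempty_of_connected hR.connected
  have hqP : q ∉ P := fun h => Set.disjoint_left.1 hPQ h hq
  have hrQ : r ∉ Q := fun h => Set.disjoint_left.1 hQR h hr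
  obtain ⟨R', hRR', hR'S, hR', hR'cl, hR'Q⟩ := exists_component_diff_touches hSP.preconnected
    ⟨q, ⟨hQS hq, hqP⟩, hq⟩ hR.connected
    (Set.subset_sdiff.2 ⟨Set.subset_sdiff.2 ⟨hRS, hPR.symm⟩, hQR.symm⟩)
  have hPR' : Disjoint P R' := Set.disjoint_right.2 fun v hv => (hR'S hv).1.2
  obtain ⟨P', hPP', hP'S, hP', hP'cl, hP'R'⟩ := exists_component_diff_touches hSQ.preconnected
    ⟨r, ⟨hRS hr, hrQ⟩, hRR' hr⟩ hP.connected
    (Set.subset_sdiff.2 ⟨Set.subset_sdiff.2 ⟨hPS, hPQ⟩, hPR'⟩)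
  have hP'Q : Disjoint P' Q := Set.disjoint_left.2 fun v hv => (hP'S hv).1.2
  have hP'R' : Disjoint P' R' := Set.disjoint_left.2 fun v hv => (hP'S hv).2
  have hQR' : Disjoint Q R' := Set.disjoint_right.2 fun v hv => (hR'S hv).2
  have hxR' : x ∉ R' := fun h => hx (hR'S h).1.1
  have hyR' : y ∉ R' := fun h => hy (hR'S h).1.1
  have hlinkP := hP.mono hPP' hP' (fun h => hx (hP'S h).1.1) (fun h => hy (hP'S h).1.1)
  by_cases htouch : Touches G P' Q
  · exact not_isPlanar_of_three_touching_links hxy hlinkP hQ (hR.mono hRR' hR' hxR' hyR') hP'Q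
      hP'R' hQR' htouch (‹Touches G P' _›.mono subset_rfl Set.inter_subset_right)
      (hR'Q.symm.mono Set.inter_subset_right subset_rfl)
  obtain ⟨K₀, hK₀R', hK₀, hK₀P, hK₀Q⟩ := exists_connected_touches_of_isClosedIn hSR
    (nonempty_of_connected hP') ⟨q, hq⟩
    (Set.subset_sdiff.2 ⟨fun v hv => (hP'S hv).1.1, hP'R'.mono_right hRR'⟩)
    (Set.subset_sdiff.2 ⟨hQS, hQR⟩) hP'Q hP'cl
    (fun u hu v hv => hR'cl hu ⟨⟨hv.1.1, fun h => hv.1.2 (hPP' h)⟩, hv.2⟩) htouch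
  obtain ⟨K, hK₀K, hKR', hK, -, hKR⟩ := exists_component_diff_touches hR'.preconnected
    ⟨r, hRR' hr, hr⟩ hK₀ hK₀R'
  exact not_isPlanar_of_three_links hxy.ne hlinkP hQ hR hP'Q (hP'R'.mono_right hRR') hQR hK
    (fun h => hxR' (hKR' h).1) (fun h => hyR' (hKR' h).1)
    (hP'R'.symm.mono_left fun v hv => (hKR' hv).1) (hQR'.symm.mono_left fun v hv => (hKR' hv).1)
    (Set.disjoint_left.2 fun v hv => (hKR' hv).2) (hK₀P.mono hK₀K subset_rfl)
    (hK₀Q.mono hK₀K subset_rfl) (hKR.mono subset_rfl Set.inter_subset_right)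

lemma IsTriconnected.eq_or_eq_of_mem_edges [Finite V] (hG : IsTriconnected G)
    (hplanar : G.IsPlanar) {e : Sym2 V} {w'' : V} {c'' : G.Walk w'' w''} (hc : IsPeripheral c)
    (hc' : IsPeripheral c') (hc'' : IsPeripheral c'') (he : e ∈ c.edges) (he' : e ∈ c'.edges)
    (he'' : e ∈ c''.edges) : walkChain c = walkChain c' ∨ walkChain c = walkChain c'' ∨
      walkChain c' = walkChain c'' := by
  by_contra! hne
  induction e with
  | _ x y
  have hxy := c.adj_of_mem_edges he
  have hdisj : ∀ {w₁ w₂ : V} {c₁ : G.Walk w₁ w₁} {c₂ : G.Walk w₂ w₂}, IsPeripheral c₁ →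
      IsPeripheral c₂ → s(x, y) ∈ c₁.edges → s(x, y) ∈ c₂.edges → walkChain c₁ ≠ walkChain c₂ →
      Disjoint ({v | v ∈ c₁.support} \ {x, y}) ({v | v ∈ c₂.support} \ {x, y}) :=
    fun {_ _ c₁ c₂} h₁ h₂ he₁ he₂ hne => disjoint_diff_pair_of_ncard_inter_le_two hxy.ne
      ⟨c₁.fst_mem_support_of_mem_edges he₁, c₂.fst_mem_support_of_mem_edges he₂⟩
      ⟨c₁.snd_mem_support_of_mem_edges he₁, c₂.snd_mem_support_of_mem_edges he₂⟩
      (hG.ncard_support_inter_le_two hplanar h₁ h₂ hne)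
  have hsub : ∀ {w₁ : V} {c₁ : G.Walk w₁ w₁}, IsPeripheral c₁ →
      {v | v ∈ c₁.support} \ {x, y} ⊆ G.support \ {x, y} := fun h₁ =>
    Set.sdiff_subset_sdiff_left fun v hv => mem_support_of_isCycle h₁.isCycle hv
  have hconn : ∀ {w₁ : V} {c₁ : G.Walk w₁ w₁}, IsPeripheral c₁ → s(x, y) ∈ c₁.edges →
      (G.induce ((G.support \ {x, y}) \ ({v | v ∈ c₁.support} \ {x, y}))).Connected := by
    intro w₁ c₁ h₁ he₁
    have hpair : {x, y} ⊆ {v | v ∈ c₁.support} := Set.insert_subset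
      (c₁.fst_mem_support_of_mem_edges he₁)
      (Set.singleton_subset_iff.2 (c₁.snd_mem_support_of_mem_edges he₁))
    rw [Set.sdiff_sdiff, Set.union_sdiff_cancel hpair]
    exact h₁.connected_diff
  exact not_isPlanar_of_three_nonseparating_links hxy
    (isLink_support_diff_of_mem_edges hc.isCycle he)
    (isLink_support_diff_of_mem_edges hc'.isCycle he')
    (isLink_support_diff_of_mem_edges hc''.isCycle he'') (fun h => h.2 (by simp))
    (fun h => h.2 (by simp)) (hsub hc) (hsub hc') (hsub hc'') (hdisj hc hc' he he' hne.1)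
    (hdisj hc hc'' he he'' hne.2.1) (hdisj hc' hc'' he' he'' hne.2.2) (hconn hc he) (hconn hc' he')
    (hconn hc'' he'') hplanar

theorem IsTriconnected.excess_add_two_le [Fintype V] (hG : IsTriconnected G) (hplanar : G.IsPlanar)
    {ω : Sym2 V → ℚ} (hω : 0 ≤ ω) (hcycles : HasHeavyCycles G ω) (hne : cycleSpace G ≠ ⊥) :
    excess G ω + 2 ≤ G.support.ncard := by
  classical
  let F := {z | ∃ (v : V) (c : G.Walk v v), IsPeripheral c ∧ walkChain c = z}.toFinite.toFinset
  have hF : ∀ z, z ∈ F ↔ ∃ (v : V) (c : G.Walk v v), IsPeripheral c ∧ walkChain c = z := by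
    simp [F]
  have hspan : cycleSpace G ≤ Submodule.span (ZMod 2) F :=
    hG.cycleSpace_le_of_forall_isPeripheral fun v c hc =>
      Submodule.subset_span ((hF _).2 ⟨v, c, hc, rfl⟩)
  have hFcycle : ∀ z ∈ F, z ∈ cycleSpace G := fun z hz => by
    obtain ⟨v, c, -, rfl⟩ := (hF z).1 hz
    exact walkChain_mem_cycleSpace c
  have hF0 : 0 ∉ F := fun h0 => by
    obtain ⟨v, c, hc, hz⟩ := (hF 0).1 h0
    exact walkChain_ne_zero hc.isCycle hz
  refine excess_add_two_le_of_span hω hcycles hFcycle hF0 hspan hne fun e => ?_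
  by_contra! hcard
  obtain ⟨z₁, z₂, z₃, h₁, h₂, h₃, h₁₂, h₁₃, h₂₃⟩ := Finset.two_lt_card_iff.1 hcard
  simp only [Finset.mem_filter, hF] at h₁ h₂ h₃
  obtain ⟨⟨v₁, c₁, hc₁, rfl⟩, he₁⟩ := h₁
  obtain ⟨⟨v₂, c₂, hc₂, rfl⟩, he₂⟩ := h₂
  obtain ⟨⟨v₃, c₃, hc₃, rfl⟩, he₃⟩ := h₃
  rcases hG.eq_or_eq_of_mem_edges hplanar hc₁ hc₂ hc₃ (support_walkChain_subset c₁ he₁)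
    (support_walkChain_subset c₂ he₂) (support_walkChain_subset c₃ he₃) with h | h | h
  exacts [h₁₂ h, h₁₃ h, h₂₃ h]

end Peripheral

/-! ### Separations -/

section Separation

variable {X : Set V}

/-- The spanning subgraph of `G` formed by the edges that meet `A`. -/
def edgesMeeting (G : SimpleGraph V) (A : Set V) : SimpleGraph V where
  Adj u v := G.Adj u v ∧ (u ∈ A ∨ v ∈ A)
  symm := ⟨fun _ _ h => ⟨h.1.symm, h.2.symm⟩⟩
  loopless := ⟨fun _ h => h.1.ne rfl⟩

lemma edgesMeeting_le (G : SimpleGraph V) (A : Set V) : edgesMeeting G A ≤ G := fun _ _ h => h.1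

lemma edgeSet_edgesMeeting (G : SimpleGraph V) (A : Set V) :
    (edgesMeeting G A).edgeSet = G.edgeSet ∩ pairsMeeting A := by
  ext e
  induction e
  simp [edgesMeeting, mk_mem_pairsMeeting]

lemma IsLink.edgesMeeting (hK : IsLink G a b K) (hKA : K ⊆ A) :
    IsLink (edgesMeeting G A) a b K where
  connected := hK.connected.mono fun u _ h => ⟨h, Or.inl (hKA u.2)⟩
  left_notMem := hK.left_notMem
  right_notMem := hK.right_notMem
  touches_left := let ⟨x, hx, y, hy, h⟩ := hK.touches_left; ⟨x, hx, y, hy, h, Or.inr (hKA hy)⟩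
  touches_right := let ⟨x, hx, y, hy, h⟩ := hK.touches_right; ⟨x, hx, y, hy, h, Or.inr (hKA hy)⟩

lemma two_le_ncard_edgeSet_of_isLink [Finite V] (hab : a ≠ b) (hK : IsLink G a b K) :
    2 ≤ G.edgeSet.ncard := by
  obtain ⟨k, -, hak⟩ : ∃ k ∈ K, G.Adj a k := by simpa [Touches] using hK.touches_left
  obtain ⟨l, hl, hbl⟩ : ∃ l ∈ K, G.Adj b l := by simpa [Touches] using hK.touches_right
  refine (Set.one_lt_ncard_iff).2 ⟨s(a, k), s(b, l), hak, hbl, fun h => ?_⟩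
  rcases Sym2.eq_iff.1 h with ⟨h, -⟩ | ⟨h, -⟩
  exacts [hab h, hK.left_notMem (h ▸ hl)]

lemma edgeSet_sup_edge (hab : a ≠ b) : (G ⊔ edge a b).edgeSet = G.edgeSet ∪ {s(a, b)} := by
  rw [edgeSet_sup, edgeSet_edge_of_ne hab]

lemma edgeSet_between (G : SimpleGraph V) (a b : V) :
    {e ∈ G.edgeSet | ∀ v ∈ e, v ∈ ({a, b} : Set V)} = G.edgeSet ∩ {s(a, b)} := by
  ext e
  induction e with
  | _ u v
  refine and_congr_right fun huv => ?_
  have hne := huv.ne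
  simp only [Sym2.mem_iff, forall_eq_or_imp, forall_eq, Set.mem_insert_iff, Set.mem_singleton_iff,
    Sym2.eq_iff]
  grind

namespace IsSeparation

lemma symm (h : IsSeparation G X A B) : IsSeparation G X B A :=
  ⟨h.subset_support, h.right_nonempty, h.left_nonempty, h.disjoint.symm,
    Set.union_comm B A ▸ h.union_eq, fun ht => h.not_touches ht.symm⟩

lemma ncard_add_ncard_add_ncard [Finite V] (h : IsSeparation G X A B) :
    A.ncard + B.ncard + X.ncard = G.support.ncard := by
  rw [← Set.ncard_union_eq h.disjoint, h.union_eq, Set.ncard_sdiff_add_ncard_of_subset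
    h.subset_support]

lemma disjoint_left (h : IsSeparation G X A B) : Disjoint A X :=
  Set.disjoint_sdiff_left.mono_left (h.union_eq ▸ Set.subset_union_left)

lemma not_adj_edgesMeeting (h : IsSeparation G {a, b} A B) : ¬ (edgesMeeting G A).Adj a b := by
  have hdisj := Set.disjoint_right.1 h.disjoint_left
  exact fun hadj => hadj.2.elim (hdisj (by simp)) (hdisj (by simp))

lemma support_edgesMeeting_subset (h : IsSeparation G X A B) :
    (edgesMeeting G A).support ⊆ A ∪ X := by
  rintro u ⟨v, huv, hA⟩
  by_contra hu
  rw [Set.mem_union, not_or] at hu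
  have huAB : u ∈ A ∪ B := h.union_eq ▸ ⟨⟨v, huv⟩, hu.2⟩
  exact h.not_touches ⟨v, hA.resolve_left hu.1, u, huAB.resolve_left hu.1, huv.symm⟩

lemma disjoint_edgeSet (h : IsSeparation G X A B) :
    Disjoint (edgesMeeting G A).edgeSet (edgesMeeting G B).edgeSet := by
  refine Set.disjoint_left.2 fun e hA hB => ?_
  induction e with
  | _ u v
  have hdisj : ∀ x ∈ A, x ∉ B := fun x hx hx' => Set.disjoint_left.1 h.disjoint hx hx'
  rcases hA with ⟨huv, hu | hv⟩ <;> rcases hB with ⟨-, hu' | hv'⟩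
  exacts [hdisj u hu hu', h.not_touches ⟨u, hu, v, hv', huv⟩,
    h.not_touches ⟨v, hv, u, hu', huv.symm⟩,
    hdisj v hv hv']

lemma edgeSet_eq (h : IsSeparation G X A B) :
    G.edgeSet = (edgesMeeting G A).edgeSet ∪ (edgesMeeting G B).edgeSet ∪
      {e ∈ G.edgeSet | ∀ v ∈ e, v ∈ X} := by
  ext e
  induction e with
  | _ u v
  have hmem : G.Adj u v → (u ∈ A ∨ u ∈ B ∨ u ∈ X) ∧ (v ∈ A ∨ v ∈ B ∨ v ∈ X) := fun huv => by
    have hAB : ∀ x ∈ G.support, x ∈ A ∨ x ∈ B ∨ x ∈ X := fun x hx => by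
      by_cases hxX : x ∈ X
      · exact Or.inr (Or.inr hxX)
      · have hxAB : x ∈ A ∪ B := h.union_eq ▸ ⟨hx, hxX⟩
        exact hxAB.imp_right Or.inl
    exact ⟨hAB u ⟨v, huv⟩, hAB v ⟨u, huv.symm⟩⟩
  simp only [edgeSet_edgesMeeting, Set.mem_union, Set.mem_inter_iff, mem_edgeSet,
    mk_mem_pairsMeeting, Set.mem_ofPred_eq, Sym2.mem_iff, forall_eq_or_imp, forall_eq]
  tauto

lemma excess_eq [Fintype V] (h : IsSeparation G X A B) (ω : Sym2 V → ℚ) :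
    excess G ω = excess (edgesMeeting G A) ω + excess (edgesMeeting G B) ω +
      ({e ∈ G.edgeSet | ∀ v ∈ e, v ∈ X}.ncard - 2 * weight ω {e ∈ G.edgeSet | ∀ v ∈ e, v ∈ X}) := by
  have hdisj : Disjoint ((edgesMeeting G A).edgeSet ∪ (edgesMeeting G B).edgeSet)
      {e ∈ G.edgeSet | ∀ v ∈ e, v ∈ X} := by
    rw [edgeSet_edgesMeeting, edgeSet_edgesMeeting]
    refine Set.disjoint_left.2 fun e he heX => ?_
    rcases he with ⟨-, x, hx, hxA⟩ | ⟨-, x, hx, hxB⟩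
    exacts [Set.disjoint_left.1 h.disjoint_left hxA (heX.2 x hx),
      Set.disjoint_left.1 h.symm.disjoint_left hxB (heX.2 x hx)]
  rw [excess, excess, excess, h.edgeSet_eq, weight_union hdisj, weight_union h.disjoint_edgeSet,
    Set.ncard_union_eq hdisj, Set.ncard_union_eq h.disjoint_edgeSet, ← h.edgeSet_eq]
  push_cast
  ring

lemma boundary_indicator_eq_zero [Fintype V] (h : IsSeparation G X A B)
    {z : Sym2 V → ZMod 2} (hz : z ∈ cycleSpace G) (hv : v ∉ X) :
    boundary ((pairsMeeting A).indicator z) v = 0 := by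
  by_cases hvA : v ∈ A
  · rw [boundary_indicator_pairsMeeting z hvA, hz.2, Pi.zero_apply]
  rw [boundary_apply]
  refine Finset.sum_eq_zero fun u _ => by_contra fun hne => ?_
  obtain ⟨hmem, hzuv⟩ := Set.indicator_apply_ne_zero.1 hne
  exact (h.support_edgesMeeting_subset ⟨u, hz.1 hzuv, mk_mem_pairsMeeting.1 hmem⟩).elim hvA hv

lemma touches_of_isClosedIn (h : IsSeparation G {a, b} A B)
    (hmin : ∀ A' B', ¬ IsSeparation G {b} A' B') (hKA : K ⊆ A) (hK : K.Nonempty)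
    (hcl : IsClosedIn G K A) : Touches G {a} K := by
  by_contra ht
  have hKX : K ⊆ G.support \ {b} := fun x hx =>
    have hxAB : x ∈ G.support \ {a, b} := h.union_eq ▸ Or.inl (hKA hx)
    ⟨hxAB.1, fun hxb => hxAB.2 (Or.inr hxb)⟩
  have ha : a ∈ G.support := h.subset_support (by simp)
  refine hmin K ((G.support \ {b}) \ K) ⟨fun x hx => h.subset_support (Or.inr hx), hK, ?_,
    Set.disjoint_sdiff_right, Set.union_sdiff_cancel hKX, ?_⟩
  · obtain ⟨y, hy⟩ := h.right_nonempty
    have hyAB : y ∈ G.support \ {a, b} := h.union_eq ▸ Or.inr hy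
    exact ⟨y, ⟨hyAB.1, fun hyb => hyAB.2 (Or.inr hyb)⟩,
      fun hyK => Set.disjoint_left.1 h.disjoint (hKA hyK) hy⟩
  · rintro ⟨u, hu, x, ⟨⟨hx, hxb⟩, hxK⟩, hux⟩
    rcases eq_or_ne x a with rfl | hxa
    · exact ht ⟨x, rfl, u, hu, hux.symm⟩
    · have hxAB : x ∈ A ∪ B := h.union_eq ▸ ⟨hx, fun hxab => hxab.elim hxa hxb⟩
      rcases hxAB with hxA | hxB
      exacts [hxK (hcl hu hxA hux), h.not_touches ⟨u, hKA hu, x, hxB, hux⟩]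

lemma exists_isLink [Finite V] (h : IsSeparation G {a, b} A B)
    (hmin : ∀ v A' B', ¬ IsSeparation G {v} A' B') : ∃ K ⊆ A, IsLink G a b K := by
  obtain ⟨v, hv⟩ := h.left_nonempty
  obtain ⟨K, hvK, hKA, hK, hcl⟩ := exists_component (G := G) hv
  have hdisj := Set.disjoint_left.1 h.disjoint_left
  exact ⟨K, hKA, hK, fun ha => hdisj (hKA ha) (by simp), fun hb => hdisj (hKA hb) (by simp),
    h.touches_of_isClosedIn (hmin b) hKA ⟨v, hvK⟩ hcl,
    (Set.pair_comm a b ▸ h).touches_of_isClosedIn (hmin a) hKA ⟨v, hvK⟩ hcl⟩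

lemma support_edgesMeeting_sup_edge_subset (h : IsSeparation G {a, b} A B) :
    (edgesMeeting G A ⊔ edge a b).support ⊆ A ∪ {a, b} := by
  rintro u ⟨v, huv | huv⟩
  · exact h.support_edgesMeeting_subset ⟨v, huv⟩
  · rw [edge_adj] at huv
    rcases huv.1 with ⟨rfl, -⟩ | ⟨rfl, -⟩ <;> simp

lemma isPlanar_edgesMeeting_sup_edge (h : IsSeparation G {a, b} A B) (hG : G.IsPlanar)
    (hK : IsLink G a b K) (hKB : K ⊆ B) : (edgesMeeting G A ⊔ edge a b).IsPlanar := by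
  refine isPlanar_of_isLink hG (sup_le_sup_right (edgesMeeting_le G A) _) hK ?_
  refine Set.disjoint_left.2 fun x hxK hx => ?_
  rcases h.support_edgesMeeting_sup_edge_subset hx with hxA | hxX
  exacts [Set.disjoint_left.1 h.disjoint hxA (hKB hxK),
    Set.disjoint_left.1 h.symm.disjoint_left (hKB hxK) hxX]

lemma ncard_edgeSet_edgesMeeting_lt [Finite V] (h : IsSeparation G X A B) :
    (edgesMeeting G A).edgeSet.ncard < G.edgeSet.ncard := by
  refine Set.ncard_lt_ncard ⟨edgeSet_mono (edgesMeeting_le G A), fun hsub => ?_⟩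
  obtain ⟨b, hb⟩ := h.right_nonempty
  have hbAX : b ∉ A ∪ X := fun hbAX => hbAX.elim (Set.disjoint_right.1 h.disjoint hb)
    (Set.disjoint_left.1 h.symm.disjoint_left hb)
  obtain ⟨v, hbv⟩ : b ∈ G.support := (h.union_eq ▸ Or.inr hb : b ∈ G.support \ X).1
  have hbvA : s(b, v) ∈ (edgesMeeting G A).edgeSet := hsub hbv
  exact hbAX (h.support_edgesMeeting_subset ⟨v, hbvA⟩)

lemma ncard_edgeSet_sup_edge_lt [Finite V] (h : IsSeparation G {a, b} A B) (hab : a ≠ b)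
    (hK : IsLink G a b K) (hKB : K ⊆ B) :
    (edgesMeeting G A ⊔ edge a b).edgeSet.ncard < G.edgeSet.ncard := by
  have hB := two_le_ncard_edgeSet_of_isLink hab (hK.edgesMeeting hKB)
  have hsub : (edgesMeeting G A).edgeSet ∪ (edgesMeeting G B).edgeSet ⊆ G.edgeSet :=
    Set.union_subset (edgeSet_mono (edgesMeeting_le G A)) (edgeSet_mono (edgesMeeting_le G B))
  have hAB := Set.ncard_le_ncard hsub
  rw [Set.ncard_union_eq h.disjoint_edgeSet] at hAB
  have hA := Set.ncard_union_le (edgesMeeting G A).edgeSet {s(a, b)}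
  rw [Set.ncard_singleton] at hA
  rw [edgeSet_sup_edge hab]
  omega

end IsSeparation

lemma ncard_edgeSet_le_three (h : G.support ⊆ {u, a, b}) : G.edgeSet.ncard ≤ 3 := by
  classical
  have hsub : G.edgeSet ⊆ {s(u, a), s(u, b), s(a, b)} := fun e he => by
    induction e with
    | _ x y
    have hx := h ⟨y, he⟩
    have hy := h ⟨x, he.symm⟩
    have hxy : x ≠ y := he.ne
    simp only [Set.mem_insert_iff, Set.mem_singleton_iff, Sym2.eq_iff] at hx hy ⊢
    grind
  refine (Set.ncard_le_ncard hsub).trans ?_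
  rw [← Finset.coe_pair, ← Finset.coe_insert, Set.ncard_coe_finset]
  exact Finset.card_le_three

lemma support_subset_of_forall_not_isSeparation
    (hsep : ∀ X A B, X.ncard ≤ 2 → ¬ IsSeparation G X A B) (hv : v ∈ G.support)
    (hab : ∀ x, G.Adj v x → x = a ∨ x = b) : G.support ⊆ {v, a, b} := by
  classical
  have hN : G.neighborSet v ⊆ {a, b} := hab
  have hNcard : (G.neighborSet v).ncard ≤ 2 := by
    refine (Set.ncard_le_ncard hN).trans ?_
    rw [← Finset.coe_pair, Set.ncard_coe_finset]
    exact Finset.card_le_two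
  refine fun x hx => by_contra fun hxv => hsep _ {v} ((G.support \ G.neighborSet v) \ {v}) hNcard
    ⟨fun y hy => ⟨v, hy.symm⟩, ⟨v, rfl⟩, ⟨x, ⟨hx, fun h => hxv (Or.inr (hN h))⟩,
      fun h => hxv (Or.inl h)⟩, Set.disjoint_sdiff_right,
      Set.union_sdiff_cancel (Set.singleton_subset_iff.2 ⟨hv, G.loopless.irrefl v⟩), ?_⟩
  rintro ⟨u, rfl, y, hy, huy⟩
  exact hy.1.2 huy

end Separation

/-! ### The weighted Euler bound -/

section EulerBound

variable [Fintype V] {X : Set V} {ω : Sym2 V → ℚ} {α : ℚ}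

/-- The consequence of Euler's formula described at `excess`, to be shown for all planar graphs by
induction on the number of edges. -/
def HasEulerBound (G : SimpleGraph V) : Prop :=
  ∀ ⦃ω : Sym2 V → ℚ⦄, 0 ≤ ω → HasHeavyCycles G ω → cycleSpace G ≠ ⊥ →
    excess G ω + 2 ≤ G.support.ncard

lemma HasHeavyCycles.mono (hG : HasHeavyCycles G ω) (h : H ≤ G) : HasHeavyCycles H ω :=
  fun z hz => hG z (cycleSpace_mono h hz)

lemma ncard_edgeSet_lt_of_cycleSpace_eq_bot (h : cycleSpace G = ⊥) (hGS : G.support ⊆ S)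
    (hS : S.Nonempty) : G.edgeSet.ncard < S.ncard := by
  have hlt := ncard_edgeSet_lt_finrank_add_ncard hGS hS
  rwa [h, finrank_bot, zero_add] at hlt

lemma excess_add_two_le_of_ncard_edgeSet_le (hω : 0 ≤ ω) (hG : HasHeavyCycles G ω)
    (hne : cycleSpace G ≠ ⊥) (h : G.edgeSet.ncard ≤ G.support.ncard) :
    excess G ω + 2 ≤ G.support.ncard := by
  obtain ⟨z, hz, hz0⟩ := Submodule.exists_mem_ne_zero_of_ne_bot hne
  have hweight := (hG z hz hz0).trans (weight_mono hω hz.1)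
  have h' : (G.edgeSet.ncard : ℚ) ≤ G.support.ncard := by exact_mod_cast h
  rw [excess]
  linarith

lemma HasEulerBound.excess_add_one_le (hG : HasEulerBound G) (hω : 0 ≤ ω)
    (hheavy : HasHeavyCycles G ω) (hGS : G.support ⊆ S) (hS : S.Nonempty) :
    excess G ω + 1 ≤ S.ncard := by
  by_cases hne : cycleSpace G = ⊥
  · have h : (G.edgeSet.ncard : ℚ) + 1 ≤ S.ncard := by
      exact_mod_cast ncard_edgeSet_lt_of_cycleSpace_eq_bot hne hGS hS
    linarith [excess_le_ncard_edgeSet (G := G) hω]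
  · have h : (G.support.ncard : ℚ) ≤ S.ncard := by exact_mod_cast Set.ncard_le_ncard hGS
    linarith [hG hω hheavy hne]

lemma excess_add_two_le_of_half_lt {e : Sym2 V} (hG : HasEulerBound (G.deleteEdges {e}))
    (hω : 0 ≤ ω) (hheavy : HasHeavyCycles G ω) (hne : cycleSpace G ≠ ⊥) (he : e ∈ G.edgeSet)
    (hhalf : 1 / 2 < ω e) : excess G ω + 2 ≤ G.support.ncard := by
  have hedges : G.edgeSet = (G.deleteEdges {e}).edgeSet ∪ {e} := by
    rw [edgeSet_deleteEdges, Set.sdiff_union_of_subset (Set.singleton_subset_iff.2 he)]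
  have hdisj : Disjoint (G.deleteEdges {e}).edgeSet {e} := by
    simp [edgeSet_deleteEdges]
  have hle : G.deleteEdges {e} ≤ G := deleteEdges_le {e}
  by_cases hbot : cycleSpace (G.deleteEdges {e}) = ⊥
  · refine excess_add_two_le_of_ncard_edgeSet_le hω hheavy hne ?_
    rw [hedges, Set.ncard_union_eq hdisj, Set.ncard_singleton]
    exact ncard_edgeSet_lt_of_cycleSpace_eq_bot hbot (support_mono hle)
      (support_nonempty_of_cycleSpace_ne_bot hne)
  · have hsupp : ((G.deleteEdges {e}).support.ncard : ℚ) ≤ G.support.ncard := by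
      exact_mod_cast Set.ncard_le_ncard (support_mono hle)
    rw [excess_eq_add hedges hdisj, Set.ncard_singleton, weight_singleton]
    push_cast
    linarith [hG hω (hheavy.mono hle) hbot]

namespace IsSeparation

lemma cycleSpace_edgesMeeting_ne_bot_or (h : IsSeparation G X A B) (hX : X.ncard ≤ 1)
    (hedges : G.edgeSet = (edgesMeeting G A).edgeSet ∪ (edgesMeeting G B).edgeSet)
    (hne : cycleSpace G ≠ ⊥) :
    cycleSpace (edgesMeeting G A) ≠ ⊥ ∨ cycleSpace (edgesMeeting G B) ≠ ⊥ := by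
  obtain ⟨z, hz, hz0⟩ := Submodule.exists_mem_ne_zero_of_ne_bot hne
  obtain ⟨e, he⟩ := Function.ne_iff.1 hz0
  have : Nonempty V := h.left_nonempty.to_subtype.map Subtype.val
  obtain ⟨a, hXa⟩ := (Set.ncard_le_one_iff_subset_singleton).1 hX
  have hside : ∀ {A B : Set V}, IsSeparation G X A B → e ∈ (edgesMeeting G A).edgeSet →
      cycleSpace (edgesMeeting G A) ≠ ⊥ := by
    intro A B h heA
    have hsupp : Function.support ((pairsMeeting A).indicator z) ⊆ (edgesMeeting G A).edgeSet := by
      rw [edgeSet_edgesMeeting, Set.support_indicator, Set.inter_comm]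
      exact Set.inter_subset_inter_left _ hz.1
    refine (Submodule.ne_bot_iff _).2 ⟨(pairsMeeting A).indicator z,
      ⟨hsupp, boundary_eq_zero_of_forall_ne (a := a) hsupp fun v hv =>
        h.boundary_indicator_eq_zero hz fun hvX => hv (hXa hvX)⟩, fun h0 => he ?_⟩
    rw [edgeSet_edgesMeeting] at heA
    simpa [Set.indicator_of_mem heA.2] using congrFun h0 e
  have heAB : e ∈ (edgesMeeting G A).edgeSet ∪ (edgesMeeting G B).edgeSet := hedges ▸ hz.1 he
  exact heAB.imp (hside h) (hside h.symm)

lemma excess_add_two_le_of_ncard_le_one (h : IsSeparation G X A B) (hX : X.ncard ≤ 1)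
    (hA : HasEulerBound (edgesMeeting G A)) (hB : HasEulerBound (edgesMeeting G B))
    (hω : 0 ≤ ω) (hheavy : HasHeavyCycles G ω) (hne : cycleSpace G ≠ ⊥) :
    excess G ω + 2 ≤ G.support.ncard := by
  have hXedges : {e ∈ G.edgeSet | ∀ v ∈ e, v ∈ X} = ∅ := by
    refine Set.eq_empty_of_forall_notMem fun e he => ?_
    induction e with
    | _ u v
    exact he.1.ne ((Set.ncard_le_one).1 hX u (he.2 u (by simp)) v (he.2 v (by simp)))
  have hedges := h.edgeSet_eq
  rw [hXedges, Set.union_empty] at hedges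
  wlog hbot : cycleSpace (edgesMeeting G A) ≠ ⊥ generalizing A B
  · exact this h.symm hB hA (hedges.trans (Set.union_comm _ _))
      ((h.cycleSpace_edgesMeeting_ne_bot_or hX hedges hne).resolve_left hbot)
  have hsuppA : ((edgesMeeting G A).support.ncard : ℚ) ≤ A.ncard + X.ncard := by
    exact_mod_cast (Set.ncard_le_ncard h.support_edgesMeeting_subset).trans (Set.ncard_union_le A X)
  have hunionB : ((B ∪ X).ncard : ℚ) ≤ B.ncard + X.ncard := by
    exact_mod_cast Set.ncard_union_le B X
  have hboundA := hA hω (hheavy.mono (edgesMeeting_le G A)) hbot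
  have hboundB := hB.excess_add_one_le hω (hheavy.mono (edgesMeeting_le G B))
    h.symm.support_edgesMeeting_subset (h.right_nonempty.inl)
  have hcard : (A.ncard + B.ncard + X.ncard : ℚ) = G.support.ncard := by
    exact_mod_cast h.ncard_add_ncard_add_ncard
  have hX' : (X.ncard : ℚ) ≤ 1 := by exact_mod_cast hX
  rw [h.excess_eq ω, hXedges, Set.ncard_empty, show weight ω ∅ = 0 by simp [weight],
    Nat.cast_zero]
  linarith

end IsSeparation

open scoped Classical in
/-- The chains of `G` with boundary `{a, b}`, which are the sums of a path from `a` to `b` and an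
element of the cycle space. -/
def chainsBetween (G : SimpleGraph V) (a b : V) : Set (Sym2 V → ZMod 2) :=
  {z | Function.support z ⊆ G.edgeSet ∧ boundary z = Pi.single a 1 + Pi.single b 1}

open scoped Classical in
lemma excess_sup_edge_update (hab : a ≠ b) (hadj : ¬ G.Adj a b) :
    excess (G ⊔ edge a b) (Function.update ω s(a, b) α) = excess G ω + (1 - 2 * α) := by
  have hdisj : Disjoint G.edgeSet {s(a, b)} := Set.disjoint_singleton_right.2 hadj
  rw [excess_eq_add (edgeSet_sup_edge hab) hdisj, Set.ncard_singleton, weight_singleton,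
    Function.update_self, Nat.cast_one, excess, excess, weight_congr fun e he =>
    Function.update_of_ne (hdisj.ne_of_mem he rfl) α ω]

lemma weight_support_add {x y : Sym2 V → ZMod 2}
    (h : Disjoint (Function.support x) (Function.support y)) :
    weight ω (Function.support (x + y)) =
      weight ω (Function.support x) + weight ω (Function.support y) := by
  rw [← weight_union h]
  congr 1
  ext e
  by_cases hx : x e = 0
  · simp [hx]
  · have hy : y e = 0 := by_contra fun hy => Set.disjoint_left.1 h hx hy
    simp [hx, hy]

open scoped Classical in
lemma add_single_mem_cycleSpace {x : Sym2 V → ZMod 2} (hx : x ∈ chainsBetween H a b) (h : H ≤ G)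
    (hab : G.Adj a b) : x + Pi.single s(a, b) 1 ∈ cycleSpace G := by
  refine ⟨(Function.support_add _ _).trans (Set.union_subset (hx.1.trans (edgeSet_mono h))
    (Pi.support_single_subset.trans (Set.singleton_subset_iff.2 hab))), ?_⟩
  rw [map_add, hx.2, boundary_single hab.ne, ZModModule.add_self]

open scoped Classical in
lemma weight_support_add_single {x : Sym2 V → ZMod 2} {e : Sym2 V} (hx : x e = 0) :
    weight ω (Function.support (x + Pi.single e 1)) = weight ω (Function.support x) + ω e := by
  rw [weight_support_add, Pi.support_single_of_ne one_ne_zero, weight_singleton]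
  rw [Pi.support_single_of_ne one_ne_zero]
  exact Set.disjoint_singleton_right.2 (Function.notMem_support.2 hx)

open scoped Classical in
lemma HasHeavyCycles.sup_edge_update (hG : HasHeavyCycles G ω) (hab : a ≠ b) (hadj : ¬ G.Adj a b)
    (hα : ∀ x ∈ chainsBetween G a b, 1 ≤ weight ω (Function.support x) + α) :
    HasHeavyCycles (G ⊔ edge a b) (Function.update ω s(a, b) α) := by
  rintro z ⟨hz, hbd⟩ hz0
  rw [edgeSet_sup_edge hab] at hz
  have hweight : ∀ {s}, s ⊆ G.edgeSet → weight (Function.update ω s(a, b) α) s = weight ω s :=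
    fun hs => weight_congr fun e he => Function.update_of_ne (ne_of_mem_of_not_mem (hs he) hadj) α ω
  by_cases hzab : z s(a, b) = 0
  · have hzG : Function.support z ⊆ G.edgeSet := fun e he =>
      (hz he).resolve_right fun h => he (h ▸ hzab)
    rw [hweight hzG]
    exact hG z ⟨hzG, hbd⟩ hz0
  obtain ⟨x, rfl⟩ : ∃ x, z = x + Pi.single s(a, b) 1 := ⟨z - Pi.single s(a, b) 1, by simp⟩
  have hxab : x s(a, b) = 0 := by
    have hone : (x + Pi.single s(a, b) 1 : Sym2 V → ZMod 2) s(a, b) = 1 :=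
      Fin.eq_one_of_ne_zero _ hzab
    rwa [Pi.add_apply, Pi.single_eq_same, add_eq_right] at hone
  have hxG : Function.support x ⊆ G.edgeSet := fun e he => by
    have hne : e ≠ s(a, b) := fun h => he (h ▸ hxab)
    exact (hz (by simpa [hne] using he)).resolve_right hne
  rw [weight_support_add_single hxab, Function.update_self, hweight hxG]
  rw [map_add, boundary_single hab, add_eq_zero_iff_eq_neg, ZModModule.neg_eq_self] at hbd
  exact hα x ⟨hxG, hbd⟩

lemma exists_weight_threshold {s t : Set ℚ} (ht : t.Finite) (hs0 : ∀ x ∈ s, 0 ≤ x)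
    (ht0 : ∀ y ∈ t, 0 ≤ y) (h : ∀ x ∈ s, ∀ y ∈ t, 1 ≤ x + y) :
    ∃ δ, 0 ≤ δ ∧ δ ≤ 1 ∧ (∀ x ∈ s, 1 ≤ x + δ) ∧ ∀ y ∈ t, δ ≤ y := by
  obtain ⟨δ, hδ, hmin⟩ := Set.exists_min_image (insert 1 t) id (ht.insert 1) ⟨1, Or.inl rfl⟩
  refine ⟨δ, ?_, hmin 1 (Or.inl rfl), fun x hx => ?_, fun y hy => hmin y (Or.inr hy)⟩
  · rcases hδ with rfl | hδ
    exacts [zero_le_one, ht0 δ hδ]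
  · rcases hδ with rfl | hδ
    exacts [le_add_of_nonneg_left (hs0 x hx), h x hx δ hδ]

namespace IsSeparation

lemma one_le_weight_add_weight (h : IsSeparation G {a, b} A B) (hab : a ≠ b)
    (hheavy : HasHeavyCycles G ω) {x y : Sym2 V → ZMod 2}
    (hx : x ∈ chainsBetween (edgesMeeting G A) a b)
    (hy : y ∈ chainsBetween (edgesMeeting G B) a b) :
    1 ≤ weight ω (Function.support x) + weight ω (Function.support y) := by
  have hdisj := h.disjoint_edgeSet.mono hx.1 hy.1
  rw [← weight_support_add hdisj]
  refine hheavy _ ⟨(Function.support_add x y).trans (Set.union_subset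
    (hx.1.trans (edgeSet_mono (edgesMeeting_le G A)))
    (hy.1.trans (edgeSet_mono (edgesMeeting_le G B)))), ?_⟩ fun h0 => ?_
  · rw [map_add, hx.2, hy.2, ZModModule.add_self]
  · rw [add_eq_zero_iff_eq_neg, ZModModule.neg_eq_self] at h0
    rw [h0, disjoint_self, Set.bot_eq_empty, Function.support_eq_empty_iff]
      at hdisj
    have ha := congrFun hy.2 a
    simp [hdisj, hab] at ha

lemma one_le_weight_add_apply (h : IsSeparation G {a, b} A B) (hheavy : HasHeavyCycles G ω)
    (hab : G.Adj a b) {x : Sym2 V → ZMod 2} (hx : x ∈ chainsBetween (edgesMeeting G A) a b) :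
    1 ≤ weight ω (Function.support x) + ω s(a, b) := by
  have hx0 : x s(a, b) = 0 := by_contra fun hne => h.not_adj_edgesMeeting (hx.1 hne)
  rw [← weight_support_add_single hx0]
  refine hheavy _ (add_single_mem_cycleSpace hx (edgesMeeting_le G A) hab) fun h0 => ?_
  simpa [hx0] using congrFun h0 s(a, b)

lemma excess_eq_of_adj (h : IsSeparation G {a, b} A B) (hab : G.Adj a b) (ω : Sym2 V → ℚ) :
    excess G ω =
      excess (edgesMeeting G A) ω + excess (edgesMeeting G B) ω + (1 - 2 * ω s(a, b)) := by
  have hinter : G.edgeSet ∩ {s(a, b)} = {s(a, b)} :=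
    Set.inter_eq_right.2 (Set.singleton_subset_iff.2 hab)
  rw [h.excess_eq ω, edgeSet_between, hinter, Set.ncard_singleton, weight_singleton, Nat.cast_one]

lemma excess_eq_of_not_adj (h : IsSeparation G {a, b} A B) (hab : ¬ G.Adj a b) (ω : Sym2 V → ℚ) :
    excess G ω = excess (edgesMeeting G A) ω + excess (edgesMeeting G B) ω := by
  have hinter : G.edgeSet ∩ {s(a, b)} = ∅ :=
    Set.disjoint_iff_inter_eq_empty.1 (Set.disjoint_singleton_right.2 hab)
  rw [h.excess_eq ω, edgeSet_between, hinter]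
  simp [weight]

/-- `α` and `β` will be the weights of virtual edges `ab` added to the two sides. -/
lemma exists_virtual_weights (h : IsSeparation G {a, b} A B) (hab : a ≠ b) (hω : 0 ≤ ω)
    (hheavy : HasHeavyCycles G ω) (hhalf : ∀ e ∈ G.edgeSet, ω e ≤ 1 / 2) :
    ∃ α β, 0 ≤ α ∧ 0 ≤ β ∧
      (∀ x ∈ chainsBetween (edgesMeeting G A) a b, 1 ≤ weight ω (Function.support x) + α) ∧
      (∀ y ∈ chainsBetween (edgesMeeting G B) a b, 1 ≤ weight ω (Function.support y) + β) ∧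
      excess G ω ≤ excess (edgesMeeting G A) ω + (1 - 2 * α) +
        (excess (edgesMeeting G B) ω + (1 - 2 * β)) := by
  by_cases hadj : G.Adj a b
  · refine ⟨ω s(a, b), ω s(a, b), hω _, hω _, fun x => h.one_le_weight_add_apply hheavy hadj,
      fun y => h.symm.one_le_weight_add_apply hheavy hadj, ?_⟩
    linarith [h.excess_eq_of_adj hadj ω, hhalf s(a, b) hadj]
  · let pathWeights (S : Set V) : Set ℚ :=
      (fun x => weight ω (Function.support x)) '' chainsBetween (edgesMeeting G S) a b
    have hnonneg : ∀ S, ∀ x ∈ pathWeights S, 0 ≤ x := fun S =>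
      Set.forall_mem_image.2 fun _ _ => weight_nonneg hω
    obtain ⟨δ, hδ0, hδ1, hA, hB⟩ := exists_weight_threshold (s := pathWeights A)
      (t := pathWeights B) (Set.toFinite _) (hnonneg A) (hnonneg B)
      (Set.forall_mem_image.2 fun x hx => Set.forall_mem_image.2 fun y hy =>
        h.one_le_weight_add_weight hab hheavy hx hy)
    refine ⟨δ, 1 - δ, hδ0, sub_nonneg.2 hδ1, fun x hx => hA _ ⟨x, hx, rfl⟩, fun y hy => ?_, ?_⟩
    · linarith [hB _ ⟨y, hy, rfl⟩]
    · linarith [h.excess_eq_of_not_adj hadj ω]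

lemma excess_add_one_sub_le (h : IsSeparation G {a, b} A B) (hab : a ≠ b)
    (hK : IsLink G a b K) (hKA : K ⊆ A) (hA : HasEulerBound (edgesMeeting G A ⊔ edge a b))
    (hω : 0 ≤ ω) (hheavy : HasHeavyCycles G ω) (hα : 0 ≤ α)
    (hαA : ∀ x ∈ chainsBetween (edgesMeeting G A) a b, 1 ≤ weight ω (Function.support x) + α) :
    excess (edgesMeeting G A) ω + (1 - 2 * α) ≤ A.ncard := by
  classical
  have hcyclic : cycleSpace (edgesMeeting G A ⊔ edge a b) ≠ ⊥ := by
    obtain ⟨v, c, hc, -⟩ := exists_isCycle_of_isLink ((hK.edgesMeeting hKA).of_le le_sup_left)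
      (Or.inr ((edge_adj ..).2 ⟨Or.inl ⟨rfl, rfl⟩, hab⟩))
    exact (Submodule.ne_bot_iff _).2 ⟨_, walkChain_mem_cycleSpace c, walkChain_ne_zero hc⟩
  have hbound := hA (le_update_iff.2 ⟨hα, fun e _ => hω e⟩)
    ((hheavy.mono (edgesMeeting_le G A)).sup_edge_update hab h.not_adj_edgesMeeting hαA) hcyclic
  rw [excess_sup_edge_update hab h.not_adj_edgesMeeting] at hbound
  have hcard : ((edgesMeeting G A ⊔ edge a b).support.ncard : ℚ) ≤ A.ncard + 2 := by
    have hpair := Set.ncard_pair hab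
    exact_mod_cast hpair ▸ (Set.ncard_le_ncard h.support_edgesMeeting_sup_edge_subset).trans
      (Set.ncard_union_le A {a, b})
  linarith

lemma excess_add_two_le_of_pair (h : IsSeparation G {a, b} A B) (hab : a ≠ b)
    (hK : IsLink G a b K) (hKA : K ⊆ A) (hQ : IsLink G a b Q) (hQB : Q ⊆ B)
    (hA : HasEulerBound (edgesMeeting G A ⊔ edge a b))
    (hB : HasEulerBound (edgesMeeting G B ⊔ edge a b)) (hω : 0 ≤ ω) (hheavy : HasHeavyCycles G ω)
    (hhalf : ∀ e ∈ G.edgeSet, ω e ≤ 1 / 2) : excess G ω + 2 ≤ G.support.ncard := by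
  obtain ⟨α, β, hα, hβ, hαA, hβB, hle⟩ := h.exists_virtual_weights hab hω hheavy hhalf
  have hboundA := h.excess_add_one_sub_le hab hK hKA hA hω hheavy hα hαA
  have hboundB := h.symm.excess_add_one_sub_le hab hQ hQB hB hω hheavy hβ hβB
  have hcard : (A.ncard + B.ncard + 2 : ℚ) = G.support.ncard := by
    rw [← h.ncard_add_ncard_add_ncard, Set.ncard_pair hab]
    push_cast
    rfl
  linarith

end IsSeparation

lemma three_le_ncard_support (hne : cycleSpace G ≠ ⊥) : 3 ≤ G.support.ncard := by
  classical
  obtain ⟨z, hz, hz0⟩ := Submodule.exists_mem_ne_zero_of_ne_bot hne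
  obtain ⟨v, c, hc, -⟩ := exists_isCycle_of_mem_cycleSpace hz hz0
  calc 3 ≤ c.support.tail.length := by simpa using hc.three_le_length
    _ = (c.support.tail.toFinset : Set V).ncard := by
      rw [Set.ncard_coe_finset, List.toFinset_card_of_nodup hc.support_nodup]
    _ ≤ G.support.ncard := Set.ncard_le_ncard fun x hx =>
      mem_support_of_isCycle hc (List.mem_of_mem_tail (by simpa using hx))

lemma excess_add_two_le_of_forall_not_isSeparation (hG : G.IsPlanar)
    (hsep : ∀ X A B, X.ncard ≤ 2 → ¬ IsSeparation G X A B) (hω : 0 ≤ ω)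
    (hheavy : HasHeavyCycles G ω) (hne : cycleSpace G ≠ ⊥) :
    excess G ω + 2 ≤ G.support.ncard := by
  by_cases hdeg : ∀ v ∈ G.support, ∀ a b, ∃ x, G.Adj v x ∧ x ≠ a ∧ x ≠ b
  · exact (IsTriconnected.mk hsep hdeg).excess_add_two_le hG hω hheavy hne
  · push Not at hdeg
    obtain ⟨v, hv, a, b, hab⟩ := hdeg
    refine excess_add_two_le_of_ncard_edgeSet_le hω hheavy hne ?_
    exact (ncard_edgeSet_le_three (support_subset_of_forall_not_isSeparation hsep hv fun x hvx =>
      or_iff_not_imp_left.2 (hab x hvx))).trans (three_le_ncard_support hne)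

theorem hasEulerBound_of_isPlanar (hG : G.IsPlanar) : HasEulerBound G := by
  induction hn : G.edgeSet.ncard using Nat.strong_induction_on generalizing G with
  | _ n ih
  subst hn
  intro ω hω hheavy hne
  have hsmaller : ∀ {H : SimpleGraph V}, H.IsPlanar → H.edgeSet.ncard < G.edgeSet.ncard →
      HasEulerBound H := fun hH hlt => ih _ hlt hH rfl
  by_cases hhalf : ∃ e ∈ G.edgeSet, 1 / 2 < ω e
  · obtain ⟨e, he, hlt⟩ := hhalf
    have hcard : (G.deleteEdges {e}).edgeSet.ncard < G.edgeSet.ncard := by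
      rw [edgeSet_deleteEdges]
      exact Set.ncard_sdiff_singleton_lt_of_mem he
    exact excess_add_two_le_of_half_lt (hsmaller (isPlanar_mono hG (deleteEdges_le {e})) hcard)
      hω hheavy hne he hlt
  by_cases hone : ∃ X A B, X.ncard ≤ 1 ∧ IsSeparation G X A B
  · obtain ⟨X, A, B, hX, h⟩ := hone
    exact h.excess_add_two_le_of_ncard_le_one hX
      (hsmaller (isPlanar_mono hG (edgesMeeting_le G A)) h.ncard_edgeSet_edgesMeeting_lt)
      (hsmaller (isPlanar_mono hG (edgesMeeting_le G B)) h.symm.ncard_edgeSet_edgesMeeting_lt)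
      hω hheavy hne
  push Not at hhalf hone
  by_cases htwo : ∃ X A B, X.ncard ≤ 2 ∧ IsSeparation G X A B
  · obtain ⟨X, A, B, hX, h⟩ := htwo
    obtain ⟨a, b, hab, rfl⟩ :=
      Set.ncard_eq_two.1 (le_antisymm hX (not_le.1 fun hle => hone X A B hle h))
    have hvertex : ∀ v A' B', ¬ IsSeparation G {v} A' B' := fun v A' B' =>
      hone {v} A' B' (Set.ncard_singleton v).le
    obtain ⟨K, hKA, hK⟩ := h.exists_isLink hvertex
    obtain ⟨Q, hQB, hQ⟩ := h.symm.exists_isLink hvertex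
    exact h.excess_add_two_le_of_pair hab hK hKA hQ hQB
      (hsmaller (h.isPlanar_edgesMeeting_sup_edge hG hQ hQB)
        (h.ncard_edgeSet_sup_edge_lt hab hQ hQB))
      (hsmaller (h.symm.isPlanar_edgesMeeting_sup_edge hG hK hKA)
        (h.symm.ncard_edgeSet_sup_edge_lt hab hK hKA)) hω hheavy hhalf
  · push Not at htwo
    exact excess_add_two_le_of_forall_not_isSeparation hG htwo hω hheavy hne

end EulerBound

/-! ### Girth -/

section Girth

variable [Fintype V] {r g : ℕ}

lemma weight_const (c : ℚ) (s : Set (Sym2 V)) : weight (fun _ => c) s = s.ncard * c := by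
  classical
  rw [weight, Set.ncard_eq_toFinset_card', ← nsmul_eq_mul, ← Finset.sum_const,
    Finset.sum_indicator_eq_sum_filter]
  simp [Set.toFinset]

lemma hasHeavyCycles_inv_of_le_girth (hg : 0 < g) (hG : g ≤ G.girth) :
    HasHeavyCycles G fun _ => (g : ℚ)⁻¹ := by
  classical
  intro z hz hz0
  obtain ⟨v, c, hc, hcz⟩ := exists_isCycle_of_mem_cycleSpace hz hz0
  have hlength : g ≤ (Function.support z).ncard := calc
    g ≤ c.length := hG.trans (girth_le_length hc)
    _ = (c.edges.toFinset : Set (Sym2 V)).ncard := by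
      rw [Set.ncard_coe_finset, List.toFinset_card_of_nodup hc.edges_nodup, Walk.length_edges]
    _ ≤ (Function.support z).ncard := Set.ncard_le_ncard fun e he => hcz e (by simpa using he)
  rw [weight_const, ← div_eq_mul_inv, one_le_div (by exact_mod_cast hg)]
  exact_mod_cast hlength

lemma cycleSpace_ne_bot_of_girth_pos (hG : 0 < G.girth) : cycleSpace G ≠ ⊥ := by
  obtain ⟨v, c, hc⟩ : ∃ (v : V) (c : G.Walk v v), c.IsCycle := by
    simpa [IsAcyclic] using mt girth_eq_zero.2 hG.ne'
  exact (Submodule.ne_bot_iff _).2 ⟨_, walkChain_mem_cycleSpace c, walkChain_ne_zero hc⟩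

theorem ncard_edgeSet_mul_le_of_le_girth (hG : G.IsPlanar) (hg : 0 < g) (hgirth : g ≤ G.girth) :
    (G.edgeSet.ncard : ℚ) * (g - 2) ≤ g * (Fintype.card V - 2) := by
  have hg' : (0 : ℚ) < g := by exact_mod_cast hg
  have heuler := hasEulerBound_of_isPlanar hG (fun _ => inv_nonneg.2 hg'.le)
    (hasHeavyCycles_inv_of_le_girth hg hgirth) (cycleSpace_ne_bot_of_girth_pos (hg.trans_le hgirth))
  have hsupport : (G.support.ncard : ℚ) ≤ Fintype.card V := by
    exact_mod_cast (Set.ncard_le_card G.support).trans_eq Nat.card_eq_fintype_card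
  rw [excess, weight_const] at heuler
  calc (G.edgeSet.ncard : ℚ) * (g - 2)
      = g * (G.edgeSet.ncard - 2 * (G.edgeSet.ncard * (g : ℚ)⁻¹)) := by field_simp
    _ ≤ g * (Fintype.card V - 2) := mul_le_mul_of_nonneg_left (by linarith) hg'.le

lemma degN_add_card_mul_le (hr : ∀ v, r ≤ G.degN v) (v : V) :
    G.degN v + Fintype.card V * r ≤ 2 * G.edgeSet.ncard + r := by
  classical
  have hdeg : ∀ u, G.degN u = G.degree u := fun u => Set.ncard_eq_toFinset_card' _
  have hrest : ∑ _u ∈ Finset.univ.erase v, r ≤ ∑ u ∈ Finset.univ.erase v, G.degree u :=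
    Finset.sum_le_sum fun u _ => (hr u).trans_eq (hdeg u)
  have hconst : r + ∑ _u ∈ Finset.univ.erase v, r = Fintype.card V * r := by
    rw [Finset.add_sum_erase Finset.univ (fun _ => r) (Finset.mem_univ v), Finset.sum_const,
      Finset.card_univ, smul_eq_mul]
  have hsum := Finset.add_sum_erase Finset.univ (fun u => G.degree u) (Finset.mem_univ v)
  rw [G.sum_degrees_eq_twice_card_edges, ← Set.ncard_coe_finset, coe_edgeFinset] at hsum
  rw [hdeg]
  omega

end Girth

end PlanarGraph

open PlanarGraph in
theorem planar_bigirth_lower_bound_general {V : Type*} [Fintype V] {G : SimpleGraph V} {r m g : ℕ}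
    (hplanar : G.IsPlanar) (hg : 3 ≤ g) (hgirth : g ≤ G.girth) (hr : ∀ v, r ≤ G.degN v)
    (hm : ∃ v, m ≤ G.degN v) (hpos : 0 < (r : ℚ) * (2 - g) + 2 * g) :
    1 + ((m : ℚ) * ((g : ℚ) - 2) + 2 * g) / ((r : ℚ) * (2 - g) + 2 * g) ≤ Fintype.card V := by
  obtain ⟨v, hv⟩ := hm
  have hedges := ncard_edgeSet_mul_le_of_le_girth hplanar (Nat.zero_lt_of_lt hg) hgirth
  have hdegrees : (m : ℚ) + Fintype.card V * r ≤ 2 * G.edgeSet.ncard + r := by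
    exact_mod_cast (Nat.add_le_add_right hv _).trans (degN_add_card_mul_le hr v)
  have hg' : (0 : ℚ) ≤ g - 2 := by
    rw [sub_nonneg]
    exact_mod_cast (Nat.le_succ 2).trans hg
  have hdiv : ((m : ℚ) * (g - 2) + 2 * g) / (r * (2 - g) + 2 * g) ≤ Fintype.card V - 1 := by
    rw [div_le_iff₀ hpos]
    linarith [mul_le_mul_of_nonneg_right hdegrees hg']
  linarith

/-- If `2 ≤ r < m`, `g ≥ 3` and `r(2−g) + 2g > 0`, then every finite
planar `({r,m};g)`-graph has at least `1 + (m(g−2)+2g)/(r(2−g)+2g)` vertices; in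
particular `n_p({r,m};g) ≥ 1 + (m(g−2)+2g)/(2g − r(g−2))`. -/
theorem planar_bigirth_lower_bound (r m g : ℕ) (hr : 2 ≤ r) (hrm : r < m) (hg : 3 ≤ g)
    (hpos : 0 < (r : ℚ) * (2 - g) + 2 * g) :
    (∀ (V : Type) [Fintype V] (G : SimpleGraph V),
      G.IsPlanar → IsBigirthGraph G r m g →
      1 + ((m : ℚ) * ((g : ℚ) - 2) + 2 * g) / ((r : ℚ) * (2 - g) + 2 * g) ≤
        (Fintype.card V : ℚ)) ∧
    ∀ n ∈ bicageOrders r m g,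
      1 + ((m : ℚ) * ((g : ℚ) - 2) + 2 * g) / (2 * g - (r : ℚ) * ((g : ℚ) - 2)) ≤ (n : ℚ) := by
  have hbound : ∀ (V : Type) [Fintype V] (G : SimpleGraph V), G.IsPlanar → IsBigirthGraph G r m g →
      1 + ((m : ℚ) * ((g : ℚ) - 2) + 2 * g) / ((r : ℚ) * (2 - g) + 2 * g) ≤ Fintype.card V :=
    fun V _ G hplanar ⟨hgirth, hdeg, _, v, hv⟩ =>
      planar_bigirth_lower_bound_general hplanar hg hgirth.ge
        (fun u => (hdeg u).elim (fun h => h.ge) fun h => hrm.le.trans h.ge) ⟨v, hv.ge⟩ hpos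
  refine ⟨hbound, ?_⟩
  rintro n ⟨V, _, G, hplanar, hG, rfl⟩
  rw [show 2 * (g : ℚ) - r * (g - 2) = r * (2 - g) + 2 * g by ring]
  exact hbound V G hplanar hG
end

section
/- For every integer m ≥ 5, n_p({4,m};3) = m+2, and this minimum is attained by the biwheel B_m, the graph consisting of a cycle of length m together with two nonadjacent vertices each adjacent to every cycle vertex. -/
open SimpleGraph

/-- The biwheel `B_m`: a cycle `0,…,m−1` together with two nonadjacent hubs `m`, `m+1`,
each adjacent to every cycle vertex. -/
def biwheel (m : ℕ) : SimpleGraph (Fin (m + 2)) :=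
  SimpleGraph.fromRel (fun a b =>
    (a.val < m ∧ b.val < m ∧ b.val = (a.val + 1) % m) ∨ (m ≤ a.val ∧ b.val < m))

/-!
In a planar graph of minimum degree at least four no vertex `v` is adjacent to all others: otherwise
the graph without `v` has minimum degree at least three, so it has a `K₄` minor, which together with
`v` is a `K₅` minor. Hence a vertex of degree `m` forces `m + 2` vertices. The `K₄` minor is found
on a longest path, by rotating the path along a shortest chord at its first vertex.

For the planarity of the biwheel, suppose it has a `K₅` or `K₃,₃` minor and delete the (at most two)
branch sets containing hubs. The remaining minor lies in the rim, where a connected set has at most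
two neighbours outside. This rules out a vertex of degree three; and when all degrees are at least
two, the branch sets cover the whole rim, so the deleted branch sets consist of hubs only and cannot
be adjacent. For `K₅` and `K₃,₃` one of the two always applies.
-/

namespace PlanarCage

variable {V W : Type*} {G : SimpleGraph V} {H : SimpleGraph W}

/-! ### Minor models -/

lemma connected_induce_image (φ : G →g H) {S : Set V} (hS : (G.induce S).Connected) :
    (H.induce (φ '' S)).Connected :=
  hS.map (induceHom φ (Set.mapsTo_image φ S)) (Set.surjective_mapsTo_image_restrict φ S)

lemma connected_induce_preimage (φ : G ↪g H) {S : Set W} (hSφ : S ⊆ Set.range φ)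
    (hS : (H.induce S).Connected) : (G.induce (φ ⁻¹' S)).Connected := by
  let e : G.induce (φ ⁻¹' S) ≃g H.induce S :=
    { toEquiv := Equiv.ofBijective (Set.MapsTo.restrict φ _ _ (Set.mapsTo_preimage φ S))
        ⟨(Set.mapsTo_preimage φ S).restrict_inj.2 φ.injective.injOn, fun ⟨y, hy⟩ => by
          obtain ⟨x, rfl⟩ := hSφ hy
          exact ⟨⟨x, hy⟩, rfl⟩⟩
      map_rel_iff' := φ.map_adj_iff }
  exact e.connected_iff.2 hS

/-- `f` is a model of `H` as a minor of `G`: its values are the branch sets in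
`SimpleGraph.IsMinorOf`. -/
structure IsMinorModel (H : SimpleGraph W) (G : SimpleGraph V) (f : W → Set V) : Prop where
  connected : ∀ w, (G.induce (f w)).Connected
  disjoint : Pairwise fun w₁ w₂ => Disjoint (f w₁) (f w₂)
  exists_adj : ∀ ⦃w₁ w₂⦄, H.Adj w₁ w₂ → ∃ v₁ ∈ f w₁, ∃ v₂ ∈ f w₂, G.Adj v₁ v₂

lemma isMinorOf_iff_exists_isMinorModel : H.IsMinorOf G ↔ ∃ f, IsMinorModel H G f :=
  ⟨fun ⟨f, h₁, h₂, h₃⟩ => ⟨f, h₁, h₂, h₃⟩, fun ⟨f, h⟩ => ⟨f, h.1, h.2, h.3⟩⟩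

namespace IsMinorModel

variable {f : W → Set V}

lemma nonempty (hf : IsMinorModel H G f) (w : W) : (f w).Nonempty :=
  Set.nonempty_coe_sort.1 (hf.connected w).nonempty

lemma eq_of_mem (hf : IsMinorModel H G f) {w₁ w₂ : W} {v : V} (h₁ : v ∈ f w₁) (h₂ : v ∈ f w₂) :
    w₁ = w₂ := by
  by_contra hne
  exact Set.disjoint_left.1 (hf.disjoint hne) h₁ h₂

lemma exists_forall_ne_notMem [Nonempty W] (hf : IsMinorModel H G f) (v : V) :
    ∃ p, ∀ w ≠ p, v ∉ f w := by
  by_cases hv : ∃ p, v ∈ f p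
  · obtain ⟨p, hp⟩ := hv
    exact ⟨p, fun w hw h => hw (hf.eq_of_mem h hp)⟩
  · exact ⟨Classical.arbitrary W, fun w _ h => hv ⟨w, h⟩⟩

lemma comap_induce {U : Type*} {R : SimpleGraph U} (hf : IsMinorModel H G f) (φ : R ↪g G)
    {T : Set W} (hT : ∀ w ∈ T, f w ⊆ Set.range φ) :
    IsMinorModel (H.induce T) R fun w => φ ⁻¹' f w where
  connected w := connected_induce_preimage φ (hT w w.2) (hf.connected w)
  disjoint _ _ hne := (hf.disjoint (Subtype.coe_ne_coe.2 hne)).preimage φ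
  exists_adj w₁ w₂ hadj := by
    obtain ⟨v₁, h₁, v₂, h₂, h⟩ := hf.exists_adj hadj
    obtain ⟨u₁, rfl⟩ := hT w₁ w₁.2 h₁
    obtain ⟨u₂, rfl⟩ := hT w₂ w₂.2 h₂
    exact ⟨u₁, h₁, u₂, h₂, φ.map_adj_iff.1 h⟩

lemma completeGraph_of_lt {ι : Type*} [LinearOrder ι] {f : ι → Set V}
    (hconn : ∀ i, (G.induce (f i)).Connected) (hdisj : ∀ i j, i < j → Disjoint (f i) (f j))
    (hadj : ∀ i j, i < j → ∃ v₁ ∈ f i, ∃ v₂ ∈ f j, G.Adj v₁ v₂) :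
    IsMinorModel (completeGraph ι) G f where
  connected := hconn
  disjoint i j hne := by
    rcases hne.lt_or_gt with h | h
    · exact hdisj i j h
    · exact (hdisj j i h).symm
  exists_adj i j hne := by
    rcases hne.lt_or_gt with h | h
    · exact hadj i j h
    · obtain ⟨x, hx, y, hy, hxy⟩ := hadj j i h
      exact ⟨y, hy, x, hx, hxy.symm⟩

end IsMinorModel

lemma completeGraph_succ_isMinorOf_of_forall_adj {n : ℕ} {v : V} (hv : ∀ w ≠ v, G.Adj v w)
    (hG : (completeGraph (Fin n)).IsMinorOf (G.induce {v}ᶜ)) :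
    (completeGraph (Fin (n + 1))).IsMinorOf G := by
  obtain ⟨f, hf⟩ := isMinorOf_iff_exists_isMinorModel.1 hG
  refine isMinorOf_iff_exists_isMinorModel.2
    ⟨Fin.cons {v} fun i => Subtype.val '' f i, .completeGraph_of_lt ?_ ?_ ?_⟩
  · refine Fin.cases (.of_subsingleton (V := ({v} : Set V))) fun i => ?_
    exact connected_induce_image (Embedding.induce {v}ᶜ).toHom (hf.connected i)
  · refine fun i j hij => Fin.cases (fun hj => ?_) (fun i hij => ?_) i hij
    · obtain ⟨j, rfl⟩ := Fin.exists_succ_eq.2 hj.ne'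
      simp
    · obtain ⟨j, rfl⟩ := Fin.exists_succ_eq.2 (Fin.ne_zero_of_lt hij)
      exact (Set.disjoint_image_iff Subtype.val_injective).2
        (hf.disjoint (Fin.succ_lt_succ_iff.1 hij).ne)
  · refine fun i j hij => Fin.cases (fun hj => ?_) (fun i hij => ?_) i hij
    · obtain ⟨j, rfl⟩ := Fin.exists_succ_eq.2 hj.ne'
      obtain ⟨w, hw⟩ := hf.nonempty j
      exact ⟨v, rfl, w, ⟨w, hw, rfl⟩, hv w w.2⟩
    · obtain ⟨j, rfl⟩ := Fin.exists_succ_eq.2 (Fin.ne_zero_of_lt hij)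
      obtain ⟨x, hx, y, hy, hxy⟩ := hf.exists_adj (Fin.succ_lt_succ_iff.1 hij).ne
      exact ⟨x, ⟨x, hx, rfl⟩, y, ⟨y, hy, rfl⟩, hxy⟩

/-! ### Minimum degree three forces a `K₄` minor -/

/-- The vertices `p 0, …, p k` are distinct and consecutive ones are adjacent; the values of `p`
beyond `k` are irrelevant. -/
structure IsPathSeq (G : SimpleGraph V) (p : ℕ → V) (k : ℕ) : Prop where
  injOn : Set.InjOn p (Set.Iic k)
  adj : ∀ t < k, G.Adj (p t) (p (t + 1))

namespace IsPathSeq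

variable {p : ℕ → V} {k : ℕ}

lemma lt_card [Finite V] (hp : IsPathSeq G p k) : k < Nat.card V := by
  have hcard := Set.ncard_le_card (p '' Set.Iic k)
  rwa [hp.injOn.ncard_image, Set.ncard_eq_toFinset_card', Set.toFinset_Iic, Nat.card_Iic] at hcard

lemma connected_induce_image_Icc (hp : IsPathSeq G p k) {a b : ℕ} (hab : a ≤ b) (hb : b ≤ k) :
    (G.induce (p '' Set.Icc a b)).Connected := by
  induction b, hab using Nat.le_induction with
  | base =>
    rw [Set.Icc_self, Set.image_singleton]
    exact .of_subsingleton
  | succ b hab ih =>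
    rw [← Set.insert_Icc_right_eq_Icc_add_one (by lia), Set.image_insert_eq, ← Set.union_singleton]
    exact connected_induce_union (ih (by lia)).preconnected .of_subsingleton
      ⟨b, ⟨hab, le_rfl⟩, rfl⟩ rfl (hp.adj b hb)

lemma cons (hp : IsPathSeq G p k) {w : V} (hw : w ∉ p '' Set.Iic k) (hadj : G.Adj w (p 0)) :
    IsPathSeq G (fun t => t.casesOn w p) (k + 1) where
  injOn := by
    rintro (_ | s) hs (_ | t) ht hst
    · rfl
    · exact absurd ⟨t, Nat.le_of_succ_le_succ ht, hst.symm⟩ hw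
    · exact absurd ⟨s, Nat.le_of_succ_le_succ hs, hst⟩ hw
    · exact congrArg _ (hp.injOn (Nat.le_of_succ_le_succ hs) (Nat.le_of_succ_le_succ ht) hst)
  adj := by
    rintro (_ | t) ht
    · exact hadj
    · exact hp.adj t (by lia)

/-- Pósa rotation: the chord from `p 0` to `p (i + 1)` replaces the edge from `p i`. -/
lemma rotate (hp : IsPathSeq G p k) {i : ℕ} (hi : i < k) (hadj : G.Adj (p 0) (p (i + 1))) :
    IsPathSeq G (fun t => if t ≤ i then p (i - t) else p t) k where
  injOn s hs t ht hst := by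
    simp only [Set.mem_Iic] at hs ht
    dsimp only at hst
    split_ifs at hst <;>
      have := hp.injOn (Set.mem_Iic.2 (by lia)) (Set.mem_Iic.2 (by lia)) hst <;> lia
  adj t ht := by
    rcases lt_trichotomy t i with h | rfl | h
    · rw [if_pos h.le, if_pos (Nat.succ_le_of_lt h), show i - t = i - (t + 1) + 1 by lia]
      exact (hp.adj (i - (t + 1)) (by lia)).symm
    · simpa using hadj
    · rw [if_neg (by lia), if_neg (by lia)]
      exact hp.adj t ht

lemma completeGraph_isMinorOf (hp : IsPathSeq G p k) {ι : Type*} [LinearOrder ι] {lo hi : ι → ℕ}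
    (hle : ∀ a, lo a ≤ hi a) (hk : ∀ a, hi a ≤ k) (hsep : ∀ a b, a < b → hi a < lo b)
    (hadj : ∀ a b, a < b →
      ∃ s ∈ Set.Icc (lo a) (hi a), ∃ t ∈ Set.Icc (lo b) (hi b), G.Adj (p s) (p t)) :
    (completeGraph ι).IsMinorOf G := by
  refine isMinorOf_iff_exists_isMinorModel.2
    ⟨fun a => p '' Set.Icc (lo a) (hi a), .completeGraph_of_lt ?_ ?_ ?_⟩
  · exact fun a => hp.connected_induce_image_Icc (hle a) (hk a)
  · refine fun a b hab => Set.disjoint_left.2 ?_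
    rintro _ ⟨s, hs, rfl⟩ ⟨t, ht, hts⟩
    obtain rfl := hp.injOn (ht.2.trans (hk b)) (hs.2.trans (hk a)) hts
    exact (hsep a b hab).not_ge (ht.1.trans hs.2)
  · intro a b hab
    obtain ⟨s, hs, t, ht, hst⟩ := hadj a b hab
    exact ⟨p s, ⟨s, hs, rfl⟩, p t, ⟨t, ht, rfl⟩, hst⟩

/-- The branch sets are `p '' [0, i]`, `{p (i + 1)}`, `{p (i + 2)}` and `p '' [i + 3, k]`. -/
lemma completeGraph_four_isMinorOf (hp : IsPathSeq G p k) {i j l : ℕ}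
    (hij : i + 2 < j) (hjk : j ≤ k) (hil : i + 2 < l) (hlk : l ≤ k)
    (hi : G.Adj (p 0) (p (i + 2))) (hj : G.Adj (p 0) (p j)) (hl : G.Adj (p (i + 1)) (p l)) :
    (completeGraph (Fin 4)).IsMinorOf G := by
  refine hp.completeGraph_isMinorOf (lo := ![0, i + 1, i + 2, i + 3]) (hi := ![i, i + 1, i + 2, k])
    ?_ ?_ ?_ ?_
  · simpa [Fin.forall_fin_succ] using by lia
  · simpa [Fin.forall_fin_succ] using by lia
  · simp [Fin.forall_fin_succ]
  · let Joined (lo hi lo' hi' : ℕ) : Prop :=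
      ∃ s ∈ Set.Icc lo hi, ∃ t ∈ Set.Icc lo' hi', G.Adj (p s) (p t)
    have h₀₁ : Joined 0 i (i + 1) (i + 1) := ⟨i, by simp, i + 1, by simp, hp.adj i (by lia)⟩
    have h₀₂ : Joined 0 i (i + 2) (i + 2) := ⟨0, by simp, i + 2, by simp, hi⟩
    have h₀₃ : Joined 0 i (i + 3) k := ⟨0, by simp, j, ⟨hij, hjk⟩, hj⟩
    have h₁₂ : Joined (i + 1) (i + 1) (i + 2) (i + 2) :=
      ⟨i + 1, by simp, i + 2, by simp, hp.adj (i + 1) (by lia)⟩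
    have h₁₃ : Joined (i + 1) (i + 1) (i + 3) k := ⟨i + 1, by simp, l, ⟨hil, hlk⟩, hl⟩
    have h₂₃ : Joined (i + 2) (i + 2) (i + 3) k :=
      ⟨i + 2, by simp, i + 3, ⟨le_rfl, by lia⟩, hp.adj (i + 2) (by lia)⟩
    intro a b hab
    fin_cases a <;> fin_cases b <;> first | assumption | exact absurd hab (by decide)

end IsPathSeq

/-- An `IsPathSeq` of maximum length. -/
structure IsLongestPathSeq (G : SimpleGraph V) (p : ℕ → V) (k : ℕ) : Prop
    extends IsPathSeq G p k where
  le_length : ∀ q l, IsPathSeq G q l → l ≤ k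

lemma exists_isLongestPathSeq [Finite V] [Nonempty V] (G : SimpleGraph V) :
    ∃ p k, IsLongestPathSeq G p k := by
  let lengths : Set ℕ := {k | ∃ p, IsPathSeq G p k}
  have hne : lengths.Nonempty := ⟨0, fun _ => Classical.arbitrary V,
    fun _ hs _ ht _ => (Nat.le_zero.1 hs).trans (Nat.le_zero.1 ht).symm, by simp⟩
  have hbdd : BddAbove lengths := ⟨Nat.card V, fun _ ⟨_, hp⟩ => hp.lt_card.le⟩
  obtain ⟨p, hp⟩ := Nat.sSup_mem hne hbdd
  exact ⟨p, _, hp, fun q l hq => le_csSup hbdd ⟨q, hq⟩⟩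

namespace IsLongestPathSeq

variable {p : ℕ → V} {k : ℕ}

lemma neighborSet_zero_subset (hp : IsLongestPathSeq G p k) :
    G.neighborSet (p 0) ⊆ p '' Set.Iic k := by
  intro w hadj
  by_contra hw
  exact (hp.le_length _ _ (hp.cons hw hadj.symm)).not_gt k.lt_succ_self

lemma exists_chord (hp : IsLongestPathSeq G p k) (hdeg : 3 ≤ G.degN (p 0)) (i : ℕ) :
    ∃ j, j + 2 ≤ k ∧ j ≠ i ∧ G.Adj (p 0) (p (j + 2)) := by
  have hcard : ({p 1, p (i + 2)} : Set V).ncard < (G.neighborSet (p 0)).ncard :=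
    ((Set.ncard_insert_le _ _).trans_eq (by rw [Set.ncard_singleton])).trans_lt hdeg
  obtain ⟨w, hadj, hw⟩ := Set.exists_mem_notMem_of_ncard_lt_ncard hcard
  obtain ⟨t, ht, rfl⟩ := hp.neighborSet_zero_subset hadj
  simp only [Set.mem_insert_iff, Set.mem_singleton_iff, not_or] at hw
  match t with
  | 0 => exact absurd hadj G.irrefl
  | 1 => exact absurd rfl hw.1
  | j + 2 => exact ⟨j, ht, fun h => hw.2 (by rw [h]), hadj⟩

end IsLongestPathSeq

/-- Among all longest paths, take one with the shortest chord at its first vertex `p 0`. Both `p 0`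
and the first vertex of the path rotated along this chord have a further chord, necessarily
longer. -/
theorem completeGraph_four_isMinorOf_of_three_le_degN [Finite V] [Nonempty V]
    (hdeg : ∀ v, 3 ≤ G.degN v) : (completeGraph (Fin 4)).IsMinorOf G := by
  classical
  let IsChord (i : ℕ) : Prop :=
    ∃ p k, IsLongestPathSeq G p k ∧ i + 2 ≤ k ∧ G.Adj (p 0) (p (i + 2))
  have hchord : ∃ i, IsChord i := by
    obtain ⟨p, k, hp⟩ := exists_isLongestPathSeq G
    obtain ⟨i, hik, -, hadj⟩ := hp.exists_chord (hdeg _) 0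
    exact ⟨i, p, k, hp, hik, hadj⟩
  obtain ⟨i, ⟨p, k, hp, hik, hi⟩, hmin⟩ : ∃ i, IsChord i ∧ ∀ j, IsChord j → i ≤ j :=
    ⟨Nat.find hchord, Nat.find_spec hchord, fun j => Nat.find_min' hchord⟩
  have hq : IsLongestPathSeq G (fun t => if t ≤ i + 1 then p (i + 1 - t) else p t) k :=
    ⟨hp.rotate hik hi, hp.le_length⟩
  obtain ⟨j, hjk, hji, hj⟩ := hp.exists_chord (hdeg _) i
  obtain ⟨l, hlk, hli, hl⟩ := hq.exists_chord (hdeg _) i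
  have hij := hmin j ⟨p, k, hp, hjk, hj⟩
  have hil := hmin l ⟨_, k, hq, hlk, hl⟩
  have hl' : G.Adj (p (i + 1)) (p (l + 2)) := by
    simpa [show ¬ l + 2 ≤ i + 1 by lia] using hl
  exact hp.completeGraph_four_isMinorOf (by lia) hjk (by lia) hlk hi hj hl'

lemma degN_induce (G : SimpleGraph V) {S : Set V} (v : S) :
    (G.induce S).degN v = (G.neighborSet v ∩ S).ncard := by
  rw [degN, neighborSet_induce, ← Set.ncard_image_of_injective _ Subtype.val_injective,
    Subtype.image_preimage_coe, Set.inter_comm]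

/-- A vertex adjacent to all others turns the `K₄` minor of the rest into a `K₅` minor. -/
theorem degN_add_two_le_card_of_isPlanar [Finite V] (hG : G.IsPlanar) (hdeg : ∀ v, 4 ≤ G.degN v)
    (v : V) : G.degN v + 2 ≤ Nat.card V := by
  by_contra! hlt
  have hsub : G.neighborSet v ⊆ {v}ᶜ := fun w hw => hw.ne'
  have hcompl : ({v}ᶜ : Set V).ncard + 1 = Nat.card V := by
    rw [← Set.ncard_add_ncard_compl {v}, Set.ncard_singleton, add_comm]
  have hnbr : G.neighborSet v = {v}ᶜ :=
    Set.eq_of_subset_of_ncard_le hsub (by rw [degN] at hlt; lia)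
  obtain ⟨w, hw⟩ := Set.nonempty_of_ncard_ne_zero (show (G.neighborSet v).ncard ≠ 0 from
    (Nat.zero_lt_of_lt (hdeg v)).ne')
  have : Nonempty ({v}ᶜ : Set V) := ⟨w, hsub hw⟩
  refine hG.1 (completeGraph_succ_isMinorOf_of_forall_adj (v := v) (fun w hw => ?_)
    (completeGraph_four_isMinorOf_of_three_le_degN fun x => ?_))
  · exact hnbr.ge hw
  · rw [degN_induce, ← Set.sdiff_eq]
    have := Set.pred_ncard_le_ncard_sdiff_singleton (G.neighborSet x) v
    have := hdeg x
    rw [degN] at this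
    lia

/-! ### Connected sets in graphs of maximum degree two -/

/-- The outer vertex boundary of `X`: the vertices outside `X` with a neighbour in `X`. -/
def outerBoundary (G : SimpleGraph V) (X : Set V) : Set V :=
  {y | y ∉ X ∧ ∃ x ∈ X, G.Adj x y}

lemma outerBoundary_singleton_subset (v : V) : outerBoundary G {v} ⊆ G.neighborSet v := by
  rintro y ⟨-, _, rfl, h⟩
  exact h

lemma outerBoundary_insert_subset (G : SimpleGraph V) (v : V) (Y : Set V) :
    outerBoundary G (insert v Y) ⊆ outerBoundary G Y \ {v} ∪ G.neighborSet v \ Y := by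
  rintro y ⟨hy, x, rfl | hx, hxy⟩
  · exact .inr ⟨hxy, fun h => hy (.inr h)⟩
  · exact .inl ⟨⟨fun h => hy (.inr h), x, hx, hxy⟩, fun h => hy (.inl h)⟩

lemma ncard_outerBoundary_insert_add_two_le [Finite V] {v : V} {Y : Set V}
    (hv : v ∈ outerBoundary G Y) :
    (outerBoundary G (insert v Y)).ncard + 2 ≤ (outerBoundary G Y).ncard + G.degN v := by
  obtain ⟨-, x, hx, hxv⟩ := id hv
  have hnew : (G.neighborSet v \ Y).ncard < G.degN v :=
    Set.ncard_lt_ncard ⟨Set.sdiff_subset, fun h => (h hxv.symm).2 hx⟩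
  have hold : (outerBoundary G Y \ {v}).ncard + 1 = (outerBoundary G Y).ncard :=
    Set.ncard_sdiff_singleton_add_one hv
  have := (Set.ncard_le_ncard (outerBoundary_insert_subset G v Y)).trans (Set.ncard_union_le _ _)
  lia

lemma outerBoundary_nonempty (hG : G.Preconnected) {Y : Set V} (hne : Y.Nonempty)
    (huniv : Y ≠ Set.univ) : (outerBoundary G Y).Nonempty := by
  obtain ⟨x, hx⟩ := hne
  obtain ⟨y, hy⟩ := (Set.ne_univ_iff_exists_notMem Y).1 huniv
  obtain ⟨d, -, hfst, hsnd⟩ := (hG x y).some.exists_boundary_dart Y hx hy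
  exact ⟨d.snd, hsnd, d.fst, hfst, d.adj⟩

lemma exists_mem_outerBoundary_of_ssubset {X Y : Set V} (hX : (G.induce X).Connected)
    (hne : Y.Nonempty) (hYX : Y ⊂ X) : ∃ v ∈ X, v ∈ outerBoundary G Y := by
  obtain ⟨z, hzX, hzY⟩ := Set.exists_of_ssubset hYX
  obtain ⟨⟨v, hv⟩, hvY, ⟨x, _⟩, hx, hadj⟩ := outerBoundary_nonempty hX.preconnected
    (Y := Subtype.val ⁻¹' Y) (let ⟨y, hy⟩ := hne; ⟨⟨y, hYX.subset hy⟩, hy⟩)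
    ((Set.ne_univ_iff_exists_notMem _).2 ⟨⟨z, hzX⟩, hzY⟩)
  exact ⟨v, hv, hvY, x, hx, hadj⟩

/-- Grow `X` one vertex at a time from a single vertex: each step removes a vertex from the boundary
and adds at most one. -/
theorem ncard_outerBoundary_le_two [Finite V] (hdeg : ∀ v, G.degN v ≤ 2) {X : Set V}
    (hX : (G.induce X).Connected) : (outerBoundary G X).ncard ≤ 2 := by
  obtain ⟨⟨x, hx⟩⟩ := hX.nonempty
  let P (Y : Set V) : Prop := Y.Nonempty ∧ Y ⊆ X ∧ (outerBoundary G Y).ncard ≤ 2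
  have hsingle : P {x} := ⟨Set.singleton_nonempty x, Set.singleton_subset_iff.2 hx,
    (Set.ncard_le_ncard (outerBoundary_singleton_subset x)).trans (hdeg x)⟩
  obtain ⟨Y, ⟨hne, hYX, hcard⟩, hmax⟩ := (Set.toFinite {Y | P Y}).exists_maximal ⟨_, hsingle⟩
  obtain rfl | hssub := hYX.eq_or_ssubset
  · exact hcard
  obtain ⟨v, hvX, hv⟩ := exists_mem_outerBoundary_of_ssubset hX hne hssub
  have hins : P (insert v Y) := by
    refine ⟨Set.insert_nonempty v Y, Set.insert_subset hvX hYX, ?_⟩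
    have := ncard_outerBoundary_insert_add_two_le hv
    have := hdeg v
    lia
  exact absurd (hmax hins (Set.subset_insert v Y) (Set.mem_insert v Y)) hv.1

namespace IsMinorModel

variable {f : W → Set V}

lemma degN_add_ncard_le_ncard_outerBoundary [Finite V] (hf : IsMinorModel H G f) (w : W) :
    H.degN w + (outerBoundary G (f w) \ ⋃ u, f u).ncard ≤ (outerBoundary G (f w)).ncard := by
  have hbranch : H.degN w ≤ (outerBoundary G (f w) ∩ ⋃ u, f u).ncard := by
    have : Nonempty V := (hf.nonempty w).to_type
    choose! x hx y hy hxy using fun u (hu : H.Adj w u) => hf.exists_adj hu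
    refine Set.ncard_le_ncard_of_injOn y (fun u hu => ?_) fun u hu u' hu' huu' => ?_
    · refine ⟨⟨fun h => hu.ne (hf.eq_of_mem h (hy u hu)), x u, hx u hu, hxy u hu⟩, ?_⟩
      exact Set.mem_iUnion.2 ⟨u, hy u hu⟩
    · exact hf.eq_of_mem (hy u hu) (huu' ▸ hy u' hu')
  have := Set.ncard_inter_add_ncard_sdiff_eq_ncard (outerBoundary G (f w)) (⋃ u, f u)
  lia

lemma degN_le_two [Finite V] (hf : IsMinorModel H G f) (hdeg : ∀ v, G.degN v ≤ 2) (w : W) :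
    H.degN w ≤ 2 := by
  have := hf.degN_add_ncard_le_ncard_outerBoundary w
  have := ncard_outerBoundary_le_two hdeg (hf.connected w)
  lia

/-- An uncovered vertex would raise the boundary of some branch set above two. -/
lemma iUnion_eq_univ [Finite V] [Nonempty W] (hf : IsMinorModel H G f) (hG : G.Preconnected)
    (hdeg : ∀ v, G.degN v ≤ 2) (hH : ∀ w, 2 ≤ H.degN w) : ⋃ w, f w = Set.univ := by
  by_contra hne
  obtain ⟨x, hx⟩ := hf.nonempty (Classical.arbitrary W)
  obtain ⟨y, hy, x, hx, hxy⟩ :=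
    outerBoundary_nonempty hG ⟨x, Set.mem_iUnion.2 ⟨_, hx⟩⟩ hne
  obtain ⟨w, hw⟩ := Set.mem_iUnion.1 hx
  have hyw : y ∈ outerBoundary G (f w) \ ⋃ u, f u :=
    ⟨⟨fun h => hy (Set.mem_iUnion.2 ⟨w, h⟩), x, hw, hxy⟩, hy⟩
  have := (Set.ncard_pos).2 ⟨y, hyw⟩
  have := hf.degN_add_ncard_le_ncard_outerBoundary w
  have := ncard_outerBoundary_le_two hdeg (hf.connected w)
  have := hH w
  lia

end IsMinorModel

/-! ### Planarity of graphs with two hubs -/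

/-- Whichever two vertices `p`, `q` (possibly equal) are deleted from `H`, the rest has a vertex of
degree at least three or has minimum degree at least two; in the latter case `p` and `q` are
adjacent. This prevents `H` from being a minor of a cycle joined to two nonadjacent hubs: take for
`p` and `q` the vertices whose branch sets contain the hubs. -/
def IsTwoHubObstruction (H : SimpleGraph W) : Prop :=
  ∀ p q, (∃ w, 3 ≤ (H.induce {p, q}ᶜ).degN w) ∨
    H.Adj p q ∧ Nonempty ({p, q}ᶜ : Set W) ∧ ∀ w, 2 ≤ (H.induce {p, q}ᶜ).degN w

lemma degN_eq_degree (v : V) [Fintype (G.neighborSet v)] : G.degN v = G.degree v := by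
  rw [degN, Set.ncard_eq_toFinset_card', degree, neighborFinset]

lemma isTwoHubObstruction_completeGraph_five : IsTwoHubObstruction (completeGraph (Fin 5)) := by
  unfold IsTwoHubObstruction
  simp only [degN_eq_degree, completeGraph, ← exists_true_iff_nonempty]
  decide

instance (α β : Type*) : DecidableRel (completeBipartiteGraph α β).Adj :=
  fun v w => inferInstanceAs (Decidable (v.isLeft ∧ w.isRight ∨ v.isRight ∧ w.isLeft))

lemma isTwoHubObstruction_completeBipartiteGraph_three_three :
    IsTwoHubObstruction (completeBipartiteGraph (Fin 3) (Fin 3)) := by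
  unfold IsTwoHubObstruction
  simp only [degN_eq_degree, ← exists_true_iff_nonempty]
  decide

theorem IsTwoHubObstruction.not_isMinorOf {U : Type*} {R : SimpleGraph U} [Finite U]
    [Nonempty W] (hH : IsTwoHubObstruction H) (φ : R ↪g G) {h₁ h₂ : V}
    (hφ : Set.range φ = {h₁, h₂}ᶜ) (hadj : ¬ G.Adj h₁ h₂) (hR : R.Preconnected)
    (hdeg : ∀ v, R.degN v ≤ 2) : ¬ H.IsMinorOf G := by
  rw [isMinorOf_iff_exists_isMinorModel]
  rintro ⟨f, hf⟩
  obtain ⟨p, hp⟩ := hf.exists_forall_ne_notMem h₁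
  obtain ⟨q, hq⟩ := hf.exists_forall_ne_notMem h₂
  have hrange : ∀ w ∈ ({p, q}ᶜ : Set W), f w ⊆ Set.range φ := by
    intro w hw v hv
    simp only [Set.mem_compl_iff, Set.mem_insert_iff, Set.mem_singleton_iff, not_or] at hw
    rw [hφ]
    rintro (rfl | rfl)
    · exact hp w hw.1 hv
    · exact hq w hw.2 hv
  have hg := hf.comap_induce φ hrange
  obtain ⟨w, hw⟩ | ⟨hpq, _, h2⟩ := hH p q
  · exact absurd (hg.degN_le_two hdeg w) (by lia)
  have hcover := hg.iUnion_eq_univ hR hdeg h2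
  have hhub : ∀ w ∈ ({p, q} : Set W), ∀ v ∈ f w, v = h₁ ∨ v = h₂ := by
    intro w hw v hv
    by_contra hne
    obtain ⟨u, rfl⟩ := hφ.ge hne
    obtain ⟨w', hu⟩ := Set.mem_iUnion.1 (hcover.ge (Set.mem_univ u))
    exact w'.2 (hf.eq_of_mem hu hv ▸ hw)
  obtain ⟨x, hx, y, hy, hxy⟩ := hf.exists_adj hpq
  rcases hhub p (.inl rfl) x hx with rfl | rfl <;> rcases hhub q (.inr rfl) y hy with rfl | rfl
  exacts [hxy.ne rfl, hadj hxy, hadj hxy.symm, hxy.ne rfl]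

theorem isPlanar_of_range_eq_compl_pair {U : Type*} {R : SimpleGraph U} [Finite U] (φ : R ↪g G)
    {h₁ h₂ : V} (hφ : Set.range φ = {h₁, h₂}ᶜ) (hadj : ¬ G.Adj h₁ h₂) (hR : R.Preconnected)
    (hdeg : ∀ v, R.degN v ≤ 2) : G.IsPlanar :=
  ⟨isTwoHubObstruction_completeGraph_five.not_isMinorOf φ hφ hadj hR hdeg,
    isTwoHubObstruction_completeBipartiteGraph_three_three.not_isMinorOf φ hφ hadj hR hdeg⟩

/-! ### The biwheel -/

lemma girth_eq_three_of_not_cliqueFree (hG : ¬ G.CliqueFree 3) : G.girth = 3 := by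
  have hle := ((not_cliqueFree_iff_top_isContained 3).1 hG).egirth_le
  rw [egirth_top (by simp)] at hle
  rw [girth, le_antisymm hle three_le_egirth]
  rfl

lemma degN_cycleGraph {m : ℕ} (hm : 3 ≤ m) (i : Fin m) : (cycleGraph m).degN i = 2 := by
  obtain ⟨n, rfl⟩ := Nat.exists_eq_add_of_le' hm
  rw [degN_eq_degree, cycleGraph_degree_three_le]

lemma cycleGraph_adj_iff_val {m : ℕ} {a b : Fin m} :
    (cycleGraph m).Adj a b ↔
      a ≠ b ∧ (b.val = (a.val + 1) % m ∨ a.val = (b.val + 1) % m) := by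
  have hsucc (i : Fin m) : (i.val + 1) % m = if i.val + 1 = m then 0 else i.val + 1 := by
    split_ifs with h
    · rw [h, Nat.mod_self]
    · exact Nat.mod_eq_of_lt (by lia)
  rw [cycleGraph_adj', hsucc, hsucc, Ne, Fin.ext_iff]
  rcases lt_trichotomy a b with h | rfl | h
  · rw [Fin.coe_sub_iff_lt.2 h, Fin.coe_sub_iff_le.2 h.le]
    lia
  · simp [Fin.coe_sub_iff_le.2 (le_refl a)]
  · rw [Fin.coe_sub_iff_lt.2 h, Fin.coe_sub_iff_le.2 h.le]
    lia

/-- The inclusion of the cycle `0, …, m - 1` into the biwheel `B_m`. -/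
def rim (m : ℕ) : cycleGraph m ↪g biwheel m where
  toEmbedding := Fin.castAddEmb 2
  map_rel_iff' := by
    intro a b
    rw [cycleGraph_adj_iff_val]
    simp [biwheel, a.isLt.not_ge, b.isLt.not_ge]

/-- The two hubs of the biwheel `B_m`, as the vertices `m` and `m + 1`. -/
def hub (m : ℕ) (j : Fin 2) : Fin (m + 2) := Fin.natAdd m j

section Biwheel

variable {m : ℕ}

lemma eq_rim_or_eq_hub (v : Fin (m + 2)) : (∃ i, v = rim m i) ∨ ∃ j, v = hub m j := by
  induction v using Fin.addCases with
  | left i => exact .inl ⟨i, rfl⟩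
  | right j => exact .inr ⟨j, rfl⟩

lemma rim_ne_hub (i : Fin m) (j : Fin 2) : rim m i ≠ hub m j :=
  Fin.ne_of_lt (i.isLt.trans_le (Nat.le_add_right m j))

lemma hub_injective : Function.Injective (hub m) := Fin.natAdd_injective 2 m

lemma biwheel_adj_hub_rim (j : Fin 2) (i : Fin m) : (biwheel m).Adj (hub m j) (rim m i) :=
  (fromRel_adj _ _ _).2 ⟨(rim_ne_hub i j).symm, .inl (.inr ⟨Nat.le_add_right m j, i.isLt⟩)⟩

lemma not_biwheel_adj_hub_hub (j k : Fin 2) : ¬ (biwheel m).Adj (hub m j) (hub m k) := by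
  simp [biwheel, hub]

lemma disjoint_range_rim_range_hub : Disjoint (Set.range (rim m)) (Set.range (hub m)) := by
  rw [Set.disjoint_range_iff]
  exact rim_ne_hub

lemma range_rim : Set.range (rim m) = (Set.range (hub m))ᶜ := by
  refine (Set.subset_compl_iff_disjoint_right.2 disjoint_range_rim_range_hub).antisymm ?_
  intro v hv
  obtain ⟨i, rfl⟩ | ⟨j, rfl⟩ := eq_rim_or_eq_hub v
  · exact ⟨i, rfl⟩
  · exact absurd ⟨j, rfl⟩ hv

lemma range_hub : Set.range (hub m) = {hub m 0, hub m 1} := by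
  ext v
  simp [Fin.exists_fin_two, eq_comm]

theorem isPlanar_biwheel (hm : 3 ≤ m) : (biwheel m).IsPlanar :=
  isPlanar_of_range_eq_compl_pair (rim m) (by rw [range_rim, range_hub])
    (not_biwheel_adj_hub_hub 0 1) cycleGraph_preconnected fun i => (degN_cycleGraph hm i).le

lemma neighborSet_biwheel_hub (j : Fin 2) :
    (biwheel m).neighborSet (hub m j) = Set.range (rim m) := by
  refine Set.Subset.antisymm (fun v hv => ?_) (Set.range_subset_iff.2 (biwheel_adj_hub_rim j))
  rw [range_rim]
  rintro ⟨k, rfl⟩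
  exact not_biwheel_adj_hub_hub j k hv

lemma degN_biwheel_hub (j : Fin 2) : (biwheel m).degN (hub m j) = m := by
  rw [degN, neighborSet_biwheel_hub, Set.ncard_range_of_injective (rim m).injective, Nat.card_fin]

lemma neighborSet_biwheel_rim (i : Fin m) :
    (biwheel m).neighborSet (rim m i) =
      rim m '' (cycleGraph m).neighborSet i ∪ Set.range (hub m) := by
  ext v
  obtain ⟨k, rfl⟩ | ⟨j, rfl⟩ := eq_rim_or_eq_hub v
  · simp [(rim_ne_hub k _).symm]
  · exact iff_of_true (biwheel_adj_hub_rim j i).symm (.inr ⟨j, rfl⟩)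

lemma degN_biwheel_rim (hm : 3 ≤ m) (i : Fin m) : (biwheel m).degN (rim m i) = 4 := by
  rw [degN, neighborSet_biwheel_rim, Set.ncard_union_eq
    (disjoint_range_rim_range_hub.mono_left (Set.image_subset_range _ _)),
    Set.ncard_image_of_injective _ (rim m).injective,
    Set.ncard_range_of_injective hub_injective, Nat.card_fin]
  exact congrArg (· + 2) (degN_cycleGraph hm i)

theorem girth_biwheel (hm : 2 ≤ m) : (biwheel m).girth = 3 := by
  refine girth_eq_three_of_not_cliqueFree fun h => h {hub m 0, rim m ⟨0, by lia⟩, rim m ⟨1, by lia⟩}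
    (is3Clique_iff.2 ⟨_, _, _, biwheel_adj_hub_rim _ _, biwheel_adj_hub_rim _ _, ?_, rfl⟩)
  rw [(rim m).map_adj_iff, cycleGraph_adj_iff_val]
  simp [Nat.mod_eq_of_lt hm]

theorem isBigirthGraph_biwheel (hm : 3 ≤ m) : IsBigirthGraph (biwheel m) 4 m 3 := by
  refine ⟨girth_biwheel (by lia), fun v => ?_, ⟨rim m ⟨0, by lia⟩, degN_biwheel_rim hm _⟩,
    ⟨hub m 0, degN_biwheel_hub 0⟩⟩
  obtain ⟨i, rfl⟩ | ⟨j, rfl⟩ := eq_rim_or_eq_hub v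
  · exact .inl (degN_biwheel_rim hm i)
  · exact .inr (degN_biwheel_hub j)

end Biwheel

end PlanarCage

/-- For `m ≥ 5`, `n_p({4,m};3) = m+2`, attained by the biwheel `B_m`. -/
theorem planar_four_m_three_cages (m : ℕ) (hm : 5 ≤ m) :
    IsLeast (bicageOrders 4 m 3) (m + 2) ∧
    (biwheel m).IsPlanar ∧ IsBigirthGraph (biwheel m) 4 m 3 ∧
      Fintype.card (Fin (m + 2)) = m + 2 := by
  have hplanar : (biwheel m).IsPlanar := PlanarCage.isPlanar_biwheel (by lia)
  have hbigirth : IsBigirthGraph (biwheel m) 4 m 3 := PlanarCage.isBigirthGraph_biwheel (by lia)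
  have hcard : Fintype.card (Fin (m + 2)) = m + 2 := Fintype.card_fin _
  refine ⟨⟨⟨_, _, biwheel m, hplanar, hbigirth, hcard⟩, ?_⟩, hplanar, hbigirth, hcard⟩
  rintro n ⟨V, _, G, hG, ⟨-, hdeg, -, v, hv⟩, rfl⟩
  have hmin : ∀ w, 4 ≤ G.degN w := fun w => by
    rcases hdeg w with h | h <;> lia
  rw [← hv, ← Nat.card_eq_fintype_card]
  exact PlanarCage.degN_add_two_le_card_of_isPlanar hG hmin v
end
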